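/- Let a, b ∈ ℂ \ (1/2)ℤ with a+b ∉ (1/2)ℤ. Then the identity operator on V^a ⊗ V^b decomposes as id_{V^a ⊗ V^b} = Σ_{k=0}^{n−1} [2(a+b−k)+n ¦ 2(a+b−k)+1]^{−1} · Y_{a+b−k}^{a,b} ∘ Y_{a,b}^{a+b−k}. -/

import Mathlib

open Complex Finset Filter
open scoped Matrix Kronecker Real

noncomputable section

/-- `ξ^a = exp(π √-1 a / n)` for the `2n`-th root of unity `ξ = exp(π √-1/n)`. -/
def xic (n : ℕ) (a : ℂ) : ℂ := Complex.exp (Real.pi * Complex.I * a / n)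

/-- `{a} = ξ^a - ξ^{-a}`. -/
def qn (n : ℕ) (a : ℂ) : ℂ := xic n a - xic n (-a)

/-- `{k}! = {1}{2}⋯{k}`. -/
def qfac (n : ℕ) (k : ℕ) : ℂ := ∏ j ∈ Finset.range k, qn n ((j : ℂ) + 1)

-- The quantum binomial `[a¦b]`, defined (and nonzero) only when `a - b ∈ {0,1,…,n-1}`.
open Classical in
def qbin (n : ℕ) (a b : ℂ) : ℂ :=
  if h : ∃ k : ℕ, k < n ∧ a - b = (k : ℂ) then
    ∏ j ∈ Finset.range h.choose, qn n (a - (j : ℂ)) / qn n (a - b - (j : ℂ))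
  else 0

/-- `[a] = {a}/{1}`. -/
def qint (n : ℕ) (a : ℂ) : ℂ := qn n a / qn n 1

/-- `a` is not a half-integer. -/
def NotHalfInt (a : ℂ) : Prop := ∀ m : ℤ, a ≠ (m : ℂ) / 2

/-- `x ∈ {0, 1, …, n-1}` (as a complex number). -/
def InZn (n : ℕ) (x : ℂ) : Prop := ∃ k : ℕ, k < n ∧ x = (k : ℂ)

/-- The matrix of `E` on `V^a = ℂ^n`: `E e_j = [j] e_{j-1}` (independent of `a`). -/
def Emat (n : ℕ) : Matrix (Fin n) (Fin n) ℂ :=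
  Matrix.of fun i j => if (j : ℕ) = (i : ℕ) + 1 then qint n ((j : ℕ) : ℂ) else 0

/-- The matrix of `F` on `V^a`: `F e_j = [2a-j] e_{j+1}` (with `e_n = 0`). -/
def Fmat (n : ℕ) (a : ℂ) : Matrix (Fin n) (Fin n) ℂ :=
  Matrix.of fun i j => if (i : ℕ) = (j : ℕ) + 1 then qint n (2 * a - ((j : ℕ) : ℂ)) else 0

/-- The matrix of `K` on `V^a`: `K e_j = ξ^{a-j} e_j`. -/
def Kmat (n : ℕ) (a : ℂ) : Matrix (Fin n) (Fin n) ℂ :=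
  Matrix.of fun i j => if i = j then xic n (a - ((i : ℕ) : ℂ)) else 0

/-- The matrix of `K⁻¹` on `V^a`. -/
def Kinvmat (n : ℕ) (a : ℂ) : Matrix (Fin n) (Fin n) ℂ :=
  Matrix.of fun i j => if i = j then xic n (-(a - ((i : ℕ) : ℂ))) else 0

/-- The `R`-matrix `R_{a,b} : V^a ⊗ V^b → V^b ⊗ V^a`:
`R(e_u ⊗ e_v) = Σ_m {m}! ξ^{2(a-u)(b-v) - m(a-b-u+v) - m(m+1)/2} [u¦u-m] [2b-v¦2b-v-m]
e_{v+m} ⊗ e_{u-m}`; the entry at row `(h,k)`, column `(u,v)` is the coefficient of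
`e_h ⊗ e_k`, nonzero only when `h + k = u + v` and `h ≥ v` (with `m = h - v`). -/
def Rmat (n : ℕ) (a b : ℂ) : Matrix (Fin n × Fin n) (Fin n × Fin n) ℂ :=
  Matrix.of fun p q =>
    if ((p.1 : ℕ) + (p.2 : ℕ) = (q.1 : ℕ) + (q.2 : ℕ)) ∧ ((q.2 : ℕ) ≤ (p.1 : ℕ)) then
      (fun m : ℕ =>
        qfac n m *
        xic n (2 * (a - ((q.1 : ℕ) : ℂ)) * (b - ((q.2 : ℕ) : ℂ))
            - (m : ℂ) * (a - b - ((q.1 : ℕ) : ℂ) + ((q.2 : ℕ) : ℂ))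
            - (m : ℂ) * ((m : ℂ) + 1) / 2) *
        qbin n ((q.1 : ℕ) : ℂ) (((q.1 : ℕ) : ℂ) - (m : ℂ)) *
        qbin n (2 * b - ((q.2 : ℕ) : ℂ)) (2 * b - ((q.2 : ℕ) : ℂ) - (m : ℂ)))
      ((p.1 : ℕ) - (q.2 : ℕ))
    else 0

/-- The Clebsch-Gordan quantum coefficient `C^{a,b,c}_{u,v,t}`. -/
def CG (n : ℕ) (a b c : ℂ) (u v t : ℕ) : ℂ :=
  Complex.exp (Real.pi * Complex.I * (c - a - b) / 2) *
  (-1 : ℂ) ^ ((v : ℤ) - (t : ℤ)) *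
  xic n (((v : ℂ) * (2 * b - (v : ℂ) + 1) - (u : ℂ) * (2 * a - (u : ℂ) + 1)) / 2) *
  (qbin n (2 * c) (2 * c - (t : ℂ)))⁻¹ *
  qbin n (2 * c) (a + b + c - ((n : ℂ) - 1)) *
  ∑ z ∈ Finset.range (t + 1),
    (-1 : ℂ) ^ z * xic n ((2 * (z : ℂ) - (t : ℂ)) * (2 * c - (t : ℂ) + 1) / 2) *
    qbin n (a + b - c) ((u : ℂ) - (z : ℂ)) *
    qbin n (2 * a - (u : ℂ) + (z : ℂ)) (2 * a - (u : ℂ)) *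
    qbin n (2 * b - (v : ℂ) + ((t : ℂ) - (z : ℂ))) (2 * b - (v : ℂ))

-- The inclusion `Y_c^{a,b} : V^c → V^a ⊗ V^b`.
open Classical in
def Yinc (n : ℕ) (a b c : ℂ) : Matrix (Fin n × Fin n) (Fin n) ℂ :=
  Matrix.of fun p t =>
    if ((p.1 : ℕ) : ℂ) + ((p.2 : ℕ) : ℂ) - ((t : ℕ) : ℂ) = a + b - c then
      CG n a b c (p.1 : ℕ) (p.2 : ℕ) (t : ℕ)
    else 0

-- The projection `Y_{a,b}^c : V^a ⊗ V^b → V^c`.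
open Classical in
def Yproj (n : ℕ) (a b c : ℂ) : Matrix (Fin n) (Fin n × Fin n) ℂ :=
  Matrix.of fun t p =>
    if ((p.1 : ℕ) : ℂ) + ((p.2 : ℕ) : ℂ) - ((t : ℕ) : ℂ) = a + b - c then
      CG n ((n : ℂ) - 1 - b) ((n : ℂ) - 1 - a) ((n : ℂ) - 1 - c)
        (n - 1 - (p.2 : ℕ)) (n - 1 - (p.1 : ℕ)) (n - 1 - (t : ℕ))
    else 0

-- Extracts the natural number `k` with `x = k` (0 if there is none).
open Classical in
def natIdx (x : ℂ) : ℕ := if h : ∃ k : ℕ, x = (k : ℂ) then h.choose else 0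

/-- The `SL(2,ℂ)` quantum 6j-symbol `{a b e; d c f}_ξ`. -/
def sixj (n : ℕ) (a b e d c f : ℂ) : ℂ :=
  (-1 : ℂ) ^ (n - 1 + natIdx (a + f - c)) *
  (qbin n (2 * f + (n : ℂ)) (2 * f + 1))⁻¹ *
  (qfac n (natIdx (d + e - c)) * qfac n (natIdx (a + b - e)) /
    (qfac n (natIdx (b + d - f)) * qfac n (natIdx (a + f - c)))) *
  qbin n (2 * e) (a + b + e + 1 - (n : ℂ)) *
  (qbin n (2 * e) (e + c - d))⁻¹ *
  ∑ z ∈ Finset.Icc (natIdx (d + e - c) - natIdx (b + d - f))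
      (min (natIdx (d + e - c)) (natIdx (a + f - c))),
    (-1 : ℂ) ^ z * qbin n (a + f + c + 1) (2 * c + (z : ℂ) + 1) *
    qbin n ((a + c - f) + (z : ℂ)) (a + c - f) *
    qbin n ((b + f - d) + (d + e - c) - (z : ℂ)) (b + f - d) *
    qbin n ((d + c - e) + (z : ℂ)) (d + f - b)

/-- The tetrahedral symbol `{a b e; d c f}_tet = {a b e; d c f}_ξ · [2f+n¦2f+1]`. -/
def sixjtet (n : ℕ) (a b e d c f : ℂ) : ℂ :=
  sixj n a b e d c f * qbin n (2 * f + (n : ℂ)) (2 * f + 1)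

/-- The Lobachevsky function `Λ(x) = -∫_0^x log|2 sin t| dt`. -/
def lob (x : ℝ) : ℝ := -∫ t in (0 : ℝ)..x, Real.log |2 * Real.sin t|

/-- A triple of integers is admissible. -/
def Admissible (n : ℕ) (i j k : ℤ) : Prop :=
  0 < i ∧ 0 < j ∧ 0 < k ∧ i < (n : ℤ) - 1 ∧ j < (n : ℤ) - 1 ∧ k < (n : ℤ) - 1 ∧
  (n : ℤ) - 1 < i + j + k ∧ i + j + k < 2 * ((n : ℤ) - 1) ∧
  0 < i + j - k ∧ 0 < j + k - i ∧ 0 < k + i - j ∧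
  i + j - k < (n : ℤ) - 1 ∧ j + k - i < (n : ℤ) - 1 ∧ k + i - j < (n : ℤ) - 1


/-! ### Basic facts on `ξ^a` and `{a}` -/

lemma xic_add (n : ℕ) (x y : ℂ) : xic n (x + y) = xic n x * xic n y := by
  unfold xic
  rw [← Complex.exp_add]
  congr 1
  ring

lemma xic_zero (n : ℕ) : xic n 0 = 1 := by
  simp [xic]

lemma xic_ne_zero (n : ℕ) (x : ℂ) : xic n x ≠ 0 := Complex.exp_ne_zero _

lemma xic_neg (n : ℕ) (x : ℂ) : xic n (-x) = (xic n x)⁻¹ := by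
  refine eq_inv_of_mul_eq_one_left ?_
  rw [← xic_add]
  simp [xic_zero]

lemma xic_self (n : ℕ) (hn : n ≠ 0) : xic n (n : ℂ) = -1 := by
  have : (n : ℂ) ≠ 0 := by exact_mod_cast hn
  unfold xic
  rw [mul_div_assoc, div_self this, mul_one, Complex.exp_pi_mul_I]

lemma xic_nmul (n : ℕ) (hn : n ≠ 0) (m : ℤ) : xic n ((n : ℂ) * (m : ℂ)) = (-1) ^ m := by
  have h0 : (n : ℂ) ≠ 0 := by exact_mod_cast hn
  unfold xic
  rw [show (Real.pi : ℂ) * Complex.I * ((n : ℂ) * m) / n = m * (Real.pi * Complex.I) by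
    field_simp, Complex.exp_int_mul, Complex.exp_pi_mul_I]

lemma qn_neg (n : ℕ) (x : ℂ) : qn n (-x) = -qn n x := by
  simp [qn]

lemma qn_zero (n : ℕ) : qn n 0 = 0 := by simp [qn]

lemma qn_add_n (n : ℕ) (hn : n ≠ 0) (x : ℂ) : qn n (x + n) = -qn n x := by
  unfold qn
  rw [xic_neg, xic_neg, xic_add, xic_self n hn]
  simp [inv_neg]
  ring

lemma qn_sub_n (n : ℕ) (hn : n ≠ 0) (x : ℂ) : qn n (x - n) = -qn n x := by
  have := qn_add_n n hn (x - n)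
  rw [sub_add_cancel] at this
  rw [this, neg_neg]

lemma qn_self (n : ℕ) (hn : n ≠ 0) : qn n (n : ℂ) = 0 := by
  have := qn_add_n n hn 0
  rw [zero_add, qn_zero, neg_zero] at this
  exact this

lemma qn_eq_zero_iff (n : ℕ) (hn : n ≠ 0) (x : ℂ) :
    qn n x = 0 ↔ ∃ m : ℤ, x = m * n := by
  have h0 : (n : ℂ) ≠ 0 := by exact_mod_cast hn
  have hpi : (Real.pi : ℂ) ≠ 0 := by exact_mod_cast Real.pi_ne_zero
  unfold qn xic
  rw [sub_eq_zero, Complex.exp_eq_exp_iff_exists_int]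
  refine exists_congr fun m => ?_
  constructor
  · intro h
    have h2 : (Real.pi : ℂ) * Complex.I * 2 * (x - m * n) = 0 := by
      field_simp at h
      have := congrArg (fun t => (Real.pi : ℂ) * Complex.I * t) h
      linear_combination this
    have h3 : x - m * n = 0 := by
      simpa [hpi, Complex.I_ne_zero] using h2
    linear_combination h3
  · rintro rfl
    field_simp
    ring

lemma qn_ne_zero_of_not_int (n : ℕ) (hn : n ≠ 0) (x : ℂ) (hx : ∀ m : ℤ, x ≠ m) :
    qn n x ≠ 0 := by
  rw [Ne, qn_eq_zero_iff n hn]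
  rintro ⟨m, hm⟩
  exact hx (m * n) (by push_cast; exact hm)

lemma qn_nat_ne_zero (n : ℕ) (m : ℕ) (h0 : 0 < m) (h : m < n) : qn n (m : ℂ) ≠ 0 := by
  rw [Ne, qn_eq_zero_iff n (by omega)]
  rintro ⟨l, hl⟩
  have hl' : (m : ℤ) = l * n := by exact_mod_cast hl
  have h1 : 0 < l := by
    by_contra hc
    have : l * n ≤ 0 := mul_nonpos_of_nonpos_of_nonneg (by omega) (by omega)
    omega
  have : (n : ℤ) ≤ l * n := by nlinarith
  omega

lemma qn_n_sub (n : ℕ) (hn : n ≠ 0) (x : ℂ) : qn n (n - x) = qn n x := by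
  rw [show (n : ℂ) - x = -x + n by ring, qn_add_n n hn, qn_neg, neg_neg]

lemma qfac_succ (n k : ℕ) : qfac n (k + 1) = qfac n k * qn n ((k : ℂ) + 1) := by
  simp [qfac, Finset.prod_range_succ]

lemma qfac_zero (n : ℕ) : qfac n 0 = 1 := by simp [qfac]

lemma qfac_ne_zero (n k : ℕ) (h : k < n) : qfac n k ≠ 0 := by
  unfold qfac
  rw [Finset.prod_ne_zero_iff]
  intro j hj
  have := qn_nat_ne_zero n (j + 1) (by omega) (by simp at hj; omega)
  push_cast at this
  exact this

lemma qfac_mul_compl (n : ℕ) (z : ℕ) (hz : z < n) :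
    qfac n z * qfac n (n - 1 - z) = qfac n (n - 1) := by
  induction z with
  | zero => simp [qfac_zero]
  | succ z ih =>
    rw [← ih (by omega), qfac_succ, show n - 1 - z = (n - 1 - (z + 1)) + 1 by omega, qfac_succ]
    have : qn n ((z : ℂ) + 1) = qn n (((n - 1 - (z + 1) : ℕ) : ℂ) + 1) := by
      rw [← qn_n_sub n (by omega)]
      congr 1
      rw [Nat.cast_sub (by omega), Nat.cast_sub (by omega)]
      push_cast
      ring
    rw [this]
    ring

/-- Falling product `{x}{x-1}⋯{x-m+1}`. -/
def pd (n : ℕ) (x : ℂ) (m : ℕ) : ℂ := ∏ j ∈ Finset.range m, qn n (x - (j : ℂ))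

lemma pd_zero (n : ℕ) (x : ℂ) : pd n x 0 = 1 := by simp [pd]

lemma pd_succ (n : ℕ) (x : ℂ) (m : ℕ) : pd n x (m + 1) = pd n x m * qn n (x - m) := by
  simp [pd, Finset.prod_range_succ]

lemma pd_succ' (n : ℕ) (x : ℂ) (m : ℕ) : pd n x (m + 1) = qn n x * pd n (x - 1) m := by
  unfold pd
  rw [Finset.prod_range_succ']
  simp only [Nat.cast_zero, sub_zero]
  rw [mul_comm]
  congr 1
  refine Finset.prod_congr rfl fun j _ => ?_
  congr 1
  push_cast
  ring

lemma pd_ne_zero (n : ℕ) (hn : n ≠ 0) (x : ℂ) (hx : ∀ m : ℤ, x ≠ m) (m : ℕ) : pd n x m ≠ 0 := by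
  unfold pd
  rw [Finset.prod_ne_zero_iff]
  intro j _
  refine qn_ne_zero_of_not_int n hn _ fun l hl => hx (l + j) ?_
  push_cast
  linear_combination hl

lemma pd_nat (n k : ℕ) : pd n (k : ℂ) k = qfac n k := by
  induction k with
  | zero => simp [pd_zero, qfac_zero]
  | succ k ih =>
    rw [pd_succ', qfac_succ]
    push_cast
    rw [add_sub_cancel_right, ih, mul_comm]

lemma pd_nat_zero (n k m : ℕ) (h : k < m) : pd n (k : ℂ) m = 0 := by
  unfold pd
  exact Finset.prod_eq_zero (i := k) (by simpa using h) (by simp [qn_zero])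

lemma pd_add (n : ℕ) (x : ℂ) (m l : ℕ) : pd n x (m + l) = pd n x m * pd n (x - m) l := by
  induction l with
  | zero => simp [pd_zero]
  | succ l ih =>
    rw [← add_assoc, pd_succ, ih, pd_succ]
    push_cast
    rw [show x - (m + l) = x - m - (l : ℂ) by ring]
    ring

lemma pd_add_n (n : ℕ) (hn : n ≠ 0) (x : ℂ) (m : ℕ) : pd n (x + n) m = (-1) ^ m * pd n x m := by
  induction m with
  | zero => simp [pd_zero]
  | succ m ih =>
    rw [pd_succ, ih, pd_succ, show x + n - (m : ℂ) = (x - m) + n by ring, qn_add_n n hn]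
    ring

lemma pd_reflect (n : ℕ) (x : ℂ) (m : ℕ) : pd n (-x) m = (-1) ^ m * pd n (x + m - 1) m := by
  induction m with
  | zero => simp [pd_zero]
  | succ m ih =>
    rw [pd_succ, ih, pd_succ', show -x - (m : ℂ) = -(x + m) by ring, qn_neg]
    push_cast
    rw [show x + (m + 1) - (1 : ℂ) = x + m by ring]
    ring

lemma qbin_eq (n : ℕ) (a b : ℂ) (k : ℕ) (hk : k < n) (h : a - b = k) :
    qbin n a b = pd n a k / qfac n k := by
  unfold qbin
  have hex : ∃ k : ℕ, k < n ∧ a - b = (k : ℂ) := ⟨k, hk, h⟩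
  rw [dif_pos hex]
  have hc : hex.choose = k := by
    have := hex.choose_spec.2
    have h3 : (k : ℂ) = (hex.choose : ℂ) := h.symm.trans this
    exact_mod_cast h3.symm
  rw [hc, Finset.prod_div_distrib, h]
  rw [← pd_nat]
  rfl

lemma qbin_zero_of_ge (n : ℕ) (a b : ℂ) (k : ℕ) (hk : n ≤ k) (h : a - b = k) :
    qbin n a b = 0 := by
  unfold qbin
  rw [dif_neg]
  rintro ⟨l, hl, hl'⟩
  rw [h] at hl'
  have : k = l := by exact_mod_cast hl'
  omega

lemma qbin_zero_of_neg (n : ℕ) (a b : ℂ) (m : ℕ) (h : b = a + m + 1) :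
    qbin n a b = 0 := by
  unfold qbin
  rw [dif_neg]
  rintro ⟨l, hl, hl'⟩
  rw [h] at hl'
  have h2 : ((m + 1 + l : ℕ) : ℂ) = 0 := by
    push_cast
    linear_combination -hl'
  have : m + 1 + l = 0 := by exact_mod_cast h2
  omega

lemma qbin_nat_zero (n k m : ℕ) (b : ℂ) (h : b = -((m : ℂ) + 1)) :
    qbin n (k : ℂ) b = 0 := by
  have h2 : (k : ℂ) - b = ((k + m + 1 : ℕ) : ℂ) := by rw [h]; push_cast; ring
  by_cases hk : k + m + 1 < n
  · rw [qbin_eq n _ _ _ hk h2, pd_nat_zero n k _ (by omega), zero_div]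
  · exact qbin_zero_of_ge n _ _ _ (by omega) h2

lemma pd_split_fac (n k i : ℕ) (h : i ≤ k) :
    pd n (k : ℂ) i * qfac n (k - i) = qfac n k := by
  have := pd_add n (k : ℂ) i (k - i)
  rw [show i + (k - i) = k by omega, pd_nat] at this
  rw [this, ← pd_nat n (k - i), Nat.cast_sub h]

lemma qbin_nat (n k i : ℕ) (hk : k < n) (h : i ≤ k) :
    qbin n (k : ℂ) (i : ℂ) = qfac n k / (qfac n i * qfac n (k - i)) := by
  rw [qbin_eq n _ _ (k - i) (by omega) (by rw [Nat.cast_sub h])]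
  have h1 := qfac_ne_zero n i (by omega)
  have h2 := qfac_ne_zero n (k - i) (by omega)
  have h3 := pd_split_fac n k (k - i) (by omega)
  rw [show k - (k - i) = i by omega] at h3
  rw [← h3]
  field_simp


lemma qn_rel1 (n : ℕ) (z w : ℂ) : qn n z * xic n (-w) + qn n w * xic n z = qn n (z + w) := by
  have h1 := xic_ne_zero n z
  have h2 := xic_ne_zero n w
  unfold qn
  rw [neg_add, xic_add, xic_add, xic_neg, xic_neg]
  field_simp
  ring

lemma qn_rel2 (n : ℕ) (z w : ℂ) : qn n w + qn n z * xic n (z + w) = xic n z * qn n (z + w) := by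
  have h1 := xic_ne_zero n z
  have h2 := xic_ne_zero n w
  unfold qn
  rw [neg_add, xic_add, xic_add, xic_neg, xic_neg]
  field_simp
  ring

/-- Symmetric Gaussian binomial with natural entries. -/
def bq (n k i : ℕ) : ℂ := if i ≤ k then qfac n k / (qfac n i * qfac n (k - i)) else 0

lemma bq_zero_right (n k : ℕ) (hk : k < n) : bq n k 0 = 1 := by
  have := qfac_ne_zero n k hk
  simp [bq, qfac_zero, this]

lemma bq_of_gt (n k i : ℕ) (h : k < i) : bq n k i = 0 := by
  simp [bq, h]

lemma bq_pascal (n k i : ℕ) (hk : k + 1 < n) :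
    bq n (k + 1) (i + 1) =
      xic n ((i : ℂ) + 1) * bq n k (i + 1) + xic n (-((k : ℂ) - i)) * bq n k i := by
  rcases lt_trichotomy i k with h | h | h
  · obtain ⟨m, rfl⟩ : ∃ m, k = i + 1 + m := ⟨k - i - 1, by omega⟩
    unfold bq
    rw [if_pos (by omega), if_pos (by omega), if_pos (by omega)]
    rw [show i + 1 + m + 1 - (i + 1) = m + 1 by omega, show i + 1 + m - (i + 1) = m by omega,
      show i + 1 + m - i = m + 1 by omega]
    have h1 := qfac_ne_zero n (i + 1) (by omega)
    have h2 := qfac_ne_zero n (m + 1) (by omega)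
    have hr := qn_rel1 n ((i : ℂ) + 1) ((m : ℂ) + 1)
    rw [qfac_succ n (i + 1 + m)]
    rw [qfac_succ n i] at h1 ⊢
    rw [qfac_succ n m] at h2 ⊢
    have h3 := left_ne_zero_of_mul h1
    have h4 := right_ne_zero_of_mul h1
    have h5 := left_ne_zero_of_mul h2
    have h6 := right_ne_zero_of_mul h2
    push_cast
    rw [show ((i : ℂ) + 1 + m + 1) = (i + 1) + (m + 1) by ring, ← hr,
      show ((i : ℂ) + 1 + m - i) = m + 1 by ring]
    field_simp
    ring
  · subst h
    have h1 := qfac_ne_zero n i (by omega)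
    have h2 := qfac_ne_zero n (i + 1) (by omega)
    simp [bq, qfac_zero, xic_zero, h1, h2]
  · rw [bq_of_gt n _ _ (by omega), bq_of_gt n _ _ (by omega), bq_of_gt n _ _ (by omega)]
    ring

/-- `q`-Chu–Vandermonde in the form needed below. -/
lemma vandermonde (n k : ℕ) (hk : k < n) (X Y : ℂ) :
    ∑ i ∈ Finset.range (k + 1), bq n k i * xic n ((i : ℂ) * (X + Y - k + 2)) *
        pd n (X + i) i * pd n (Y - i) (k - i)
      = xic n ((k : ℂ) * (X + 1)) * pd n (X + Y + 1) k := by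
  induction k generalizing X Y with
  | zero => simp [bq, qfac_zero, xic_zero, pd_zero]
  | succ k ih =>
    have ih1 := ih (by omega) X Y
    have ih2 := ih (by omega) (X + 1) (Y - 1)
    have key : ∑ i ∈ Finset.range (k + 1 + 1), bq n (k + 1) i *
          xic n ((i : ℂ) * (X + Y - (k + 1 : ℕ) + 2)) * pd n (X + i) i * pd n (Y - i) (k + 1 - i)
        = (∑ i ∈ Finset.range (k + 1), bq n k i * xic n ((i : ℂ) * (X + Y - k + 2)) *
            pd n (X + i) i * pd n (Y - i) (k - i)) * qn n (Y - k)
          + qn n (X + 1) * xic n (X + Y - 2 * k + 1) *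
            ∑ i ∈ Finset.range (k + 1), bq n k i *
              xic n ((i : ℂ) * (X + 1 + (Y - 1) - k + 2)) *
              pd n (X + 1 + i) i * pd n (Y - 1 - i) (k - i) := by
      have hA : ∀ i ∈ Finset.range (k + 1), bq n k i * xic n ((i : ℂ) * (X + Y - k + 2)) *
            pd n (X + i) i * pd n (Y - i) (k - i) * qn n (Y - k)
          = xic n (i : ℂ) * bq n k i * xic n ((i : ℂ) * (X + Y - (k + 1 : ℕ) + 2)) *
            pd n (X + i) i * pd n (Y - i) (k + 1 - i) := by
        intro i hi
        simp only [Finset.mem_range] at hi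
        rw [show k + 1 - i = (k - i) + 1 by omega, pd_succ, Nat.cast_sub (by omega),
          show Y - i - ((k : ℂ) - i) = Y - k by ring]
        have : xic n ((i : ℂ) * (X + Y - k + 2)) =
            xic n (i : ℂ) * xic n ((i : ℂ) * (X + Y - (k + 1 : ℕ) + 2)) := by
          rw [← xic_add]
          congr 1
          push_cast
          ring
        rw [this]
        ring
      have hB : ∀ i ∈ Finset.range (k + 1), qn n (X + 1) * xic n (X + Y - 2 * k + 1) *
            (bq n k i * xic n ((i : ℂ) * (X + 1 + (Y - 1) - k + 2)) *
              pd n (X + 1 + i) i * pd n (Y - 1 - i) (k - i))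
          = xic n (-((k : ℂ) - i)) * bq n k i *
            xic n (((i + 1 : ℕ) : ℂ) * (X + Y - (k + 1 : ℕ) + 2)) *
            pd n (X + (i + 1 : ℕ)) (i + 1) * pd n (Y - (i + 1 : ℕ)) (k + 1 - (i + 1)) := by
        intro i hi
        simp only [Finset.mem_range] at hi
        have : xic n (X + Y - 2 * k + 1) * xic n ((i : ℂ) * (X + 1 + (Y - 1) - k + 2)) =
            xic n (-((k : ℂ) - i)) * xic n (((i + 1 : ℕ) : ℂ) * (X + Y - (k + 1 : ℕ) + 2)) := by
          rw [← xic_add, ← xic_add]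
          congr 1
          push_cast
          ring
        rw [pd_succ, show k + 1 - (i + 1) = k - i by omega]
        push_cast at this ⊢
        rw [show X + ((i : ℂ) + 1) - i = X + 1 by ring,
          show X + ((i : ℂ) + 1) = X + 1 + i by ring,
          show Y - ((i : ℂ) + 1) = Y - 1 - i by ring]
        linear_combination (qn n (X + 1) * bq n k i *
              pd n (X + 1 + i) i * pd n (Y - 1 - i) (k - i)) * this
      rw [Finset.sum_mul, Finset.mul_sum, Finset.sum_congr rfl hA, Finset.sum_congr rfl hB]
      rw [Finset.sum_range_succ' (n := k + 1)]
      have hlast : ∑ i ∈ Finset.range (k + 1), xic n (i : ℂ) * bq n k i *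
            xic n ((i : ℂ) * (X + Y - (k + 1 : ℕ) + 2)) *
            pd n (X + i) i * pd n (Y - i) (k + 1 - i)
          = ∑ i ∈ Finset.range (k + 1 + 1), xic n (i : ℂ) * bq n k i *
            xic n ((i : ℂ) * (X + Y - (k + 1 : ℕ) + 2)) *
            pd n (X + i) i * pd n (Y - i) (k + 1 - i) := by
        rw [Finset.sum_range_succ (n := k + 1), bq_of_gt n k (k + 1) (by omega)]
        simp
      rw [hlast, Finset.sum_range_succ' (n := k + 1)]
      rw [bq_zero_right n _ (by omega), bq_zero_right n _ (by omega)]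
      have hP : ∀ i ∈ Finset.range (k + 1), bq n (k + 1) (i + 1) *
          xic n (((i + 1 : ℕ) : ℂ) * (X + Y - (k + 1 : ℕ) + 2)) *
            pd n (X + (i + 1 : ℕ)) (i + 1) * pd n (Y - (i + 1 : ℕ)) (k + 1 - (i + 1))
          = xic n ((i + 1 : ℕ) : ℂ) * bq n k (i + 1) *
            xic n (((i + 1 : ℕ) : ℂ) * (X + Y - (k + 1 : ℕ) + 2)) *
            pd n (X + (i + 1 : ℕ)) (i + 1) * pd n (Y - (i + 1 : ℕ)) (k + 1 - (i + 1))
          + xic n (-((k : ℂ) - i)) * bq n k i *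
            xic n (((i + 1 : ℕ) : ℂ) * (X + Y - (k + 1 : ℕ) + 2)) *
            pd n (X + (i + 1 : ℕ)) (i + 1) * pd n (Y - (i + 1 : ℕ)) (k + 1 - (i + 1)) := by
        intro i _
        rw [bq_pascal n k i hk]
        push_cast
        ring
      rw [Finset.sum_congr rfl hP, Finset.sum_add_distrib]
      simp only [Nat.cast_zero, xic_zero]
      ring
    rw [key, ih1, ih2, show X + 1 + (Y - 1) + 1 = X + Y + 1 by ring, pd_succ]
    have hr := qn_rel2 n (X + 1) (Y - k)
    have e1 : xic n (X + Y - 2 * k + 1) * xic n ((k : ℂ) * (X + 1 + 1)) =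
        xic n ((k : ℂ) * (X + 1)) * xic n (X + 1 + (Y - k)) := by
      rw [← xic_add, ← xic_add]
      congr 1
      ring
    have e2 : xic n (((k + 1 : ℕ) : ℂ) * (X + 1)) = xic n ((k : ℂ) * (X + 1)) * xic n (X + 1) := by
      rw [← xic_add]
      congr 1
      push_cast
      ring
    rw [e2, show X + Y + 1 - (k : ℂ) = X + 1 + (Y - k) by ring]
    linear_combination (xic n ((k : ℂ) * (X + 1)) * pd n (X + Y + 1) k) * hr +
      (qn n (X + 1) * pd n (X + Y + 1) k) * e1


lemma neg_xic (n : ℕ) (hn : n ≠ 0) (x : ℂ) : -xic n x = xic n (x + n) := by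
  rw [xic_add, xic_self n hn]
  ring

lemma neg_xic' (n : ℕ) (hn : n ≠ 0) (x : ℂ) : -xic n x = xic n (x - n) := by
  rw [neg_eq_iff_eq_neg, neg_xic n hn, sub_add_cancel]

/-- The sum in the Clebsch–Gordan coefficient, with complex weights `u`, `v`. -/
def Ssum (n k : ℕ) (a b c u v : ℂ) (t : ℕ) : ℂ :=
  ∑ z ∈ Finset.range (t + 1),
    (-1 : ℂ) ^ z * xic n ((2 * (z : ℂ) - t) * (2 * c - t + 1) / 2) * qbin n (k : ℂ) (u - z) *
      (pd n (2 * a - u + z) z / qfac n z) *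
      (pd n (2 * b - v + ((t : ℂ) - z)) (t - z) / qfac n (t - z))

/-- Common part of the terms in the recursion for `Ssum`. -/
def Acom (n k : ℕ) (a b c u v : ℂ) (t z : ℕ) : ℂ :=
  (-1 : ℂ) ^ z * xic n ((2 * (z : ℂ) - (t + 1)) * (2 * c - t) / 2) * qbin n (k : ℂ) (u - z) *
    pd n (2 * a - u + z) z * pd n (2 * b - v + ((t : ℂ) + 1 - z)) (t + 1 - z)

lemma Ssum_left (n k : ℕ) (a b c u v : ℂ) (t : ℕ) :
    qn n (2 * a - u + 1) * xic n (c - t) * Ssum n k a b c (u - 1) v t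
      = -∑ z ∈ Finset.range (t + 1), Acom n k a b c u v t (z + 1) * xic n ((z : ℂ) - t) /
          (qfac n z * qfac n (t - z)) := by
  unfold Ssum Acom
  rw [Finset.mul_sum, ← Finset.sum_neg_distrib]
  refine Finset.sum_congr rfl fun z hz => ?_
  have he : xic n (c - t) * xic n ((2 * (z : ℂ) - t) * (2 * c - t + 1) / 2) =
      xic n ((2 * ((z : ℂ) + 1) - (t + 1)) * (2 * c - t) / 2) * xic n ((z : ℂ) - t) := by
    rw [← xic_add, ← xic_add]
    congr 1
    ring
  rw [pd_succ n _ z, show t + 1 - (z + 1) = t - z by omega]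
  push_cast
  rw [show 2 * a - u + ((z : ℂ) + 1) - z = 2 * a - u + 1 by ring,
    show 2 * a - u + ((z : ℂ) + 1) = 2 * a - (u - 1) + z by ring,
    show u - ((z : ℂ) + 1) = u - 1 - z by ring,
    show (t : ℂ) + 1 - (z + 1) = t - z by ring, pow_succ]
  rw [show ∀ p q r s x y Q : ℂ, -(p * -1 * x * q * (r * Q) * s * y / (qfac n z * qfac n (t - z)))
    = Q * p * q * (r / qfac n z) * (s / qfac n (t - z)) * (x * y) by intros; ring, ← he]
  ring

lemma Ssum_right (n k : ℕ) (a b c u v : ℂ) (t : ℕ) :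
    qn n (2 * b - v + 1) * xic n (-(c - t)) * Ssum n k a b c u (v - 1) t
      = ∑ z ∈ Finset.range (t + 1), Acom n k a b c u v t z * xic n (z : ℂ) /
          (qfac n z * qfac n (t - z)) := by
  unfold Ssum Acom
  rw [Finset.mul_sum]
  refine Finset.sum_congr rfl fun z hz => ?_
  simp only [Finset.mem_range] at hz
  have he : xic n (-(c - t)) * xic n ((2 * (z : ℂ) - t) * (2 * c - t + 1) / 2) =
      xic n ((2 * (z : ℂ) - (t + 1)) * (2 * c - t) / 2) * xic n (z : ℂ) := by
    rw [← xic_add, ← xic_add]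
    congr 1
    ring
  rw [show t + 1 - z = t - z + 1 by omega, pd_succ n _ (t - z), Nat.cast_sub (by omega)]
  rw [show 2 * b - v + ((t : ℂ) + 1 - z) - (t - z) = 2 * b - v + 1 by ring,
    show 2 * b - v + ((t : ℂ) + 1 - z) = 2 * b - (v - 1) + (t - z) by ring]
  rw [show ∀ p q r s x y Q : ℂ, (p * x * q * r * (s * Q) * y / (qfac n z * qfac n (t - z)))
    = Q * p * q * (r / qfac n z) * (s / qfac n (t - z)) * (x * y) by intros; ring, ← he]
  ring

lemma Ssum_succ (n k : ℕ) (a b c u v : ℂ) (t : ℕ) :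
    Ssum n k a b c u v (t + 1) = ∑ z ∈ Finset.range (t + 2), Acom n k a b c u v t z /
          (qfac n z * qfac n (t + 1 - z)) := by
  unfold Ssum Acom
  refine Finset.sum_congr rfl fun z _ => ?_
  push_cast
  rw [show 2 * c - ((t : ℂ) + 1) + 1 = 2 * c - t by ring]
  ring

lemma Ssum_rec (n k : ℕ) (a b c u v : ℂ) (t : ℕ) (ht : t + 1 < n) :
    qn n (2 * a - u + 1) * xic n (c - t) * Ssum n k a b c (u - 1) v t
      - qn n (2 * b - v + 1) * xic n (-(c - t)) * Ssum n k a b c u (v - 1) t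
      = -qn n ((t : ℂ) + 1) * Ssum n k a b c u v (t + 1) := by
  rw [Ssum_left, Ssum_right, Ssum_succ]
  have h1 : ∑ z ∈ Finset.range (t + 1), Acom n k a b c u v t (z + 1) * xic n ((z : ℂ) - t) /
          (qfac n z * qfac n (t - z))
      = ∑ z ∈ Finset.range (t + 2), Acom n k a b c u v t z *
          (qn n (z : ℂ) * xic n (-((t : ℂ) + 1 - z))) / (qfac n z * qfac n (t + 1 - z)) := by
    rw [Finset.sum_range_succ' (n := t + 1)]
    simp only [Nat.cast_zero, qn_zero, zero_mul, mul_zero, zero_div, add_zero]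
    refine Finset.sum_congr rfl fun z hz => ?_
    simp only [Finset.mem_range] at hz
    have h3 := qfac_ne_zero n (z + 1) (by omega)
    rw [qfac_succ] at h3 ⊢
    have h4 := left_ne_zero_of_mul h3
    have h5 := right_ne_zero_of_mul h3
    have h6 := qfac_ne_zero n (t - z) (by omega)
    rw [show t + 1 - (z + 1) = t - z by omega]
    push_cast
    rw [show -((t : ℂ) + 1 - (z + 1)) = z - t by ring]
    field_simp
  have h2 : ∑ z ∈ Finset.range (t + 1), Acom n k a b c u v t z * xic n (z : ℂ) /
          (qfac n z * qfac n (t - z))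
      = ∑ z ∈ Finset.range (t + 2), Acom n k a b c u v t z *
          (qn n ((t : ℂ) + 1 - z) * xic n (z : ℂ)) / (qfac n z * qfac n (t + 1 - z)) := by
    rw [Finset.sum_range_succ (n := t + 1)]
    push_cast
    simp only [sub_self, qn_zero, zero_mul, mul_zero, zero_div, add_zero]
    refine Finset.sum_congr rfl fun z hz => ?_
    simp only [Finset.mem_range] at hz
    have h3 := qfac_ne_zero n (t - z + 1) (by omega)
    rw [show t + 1 - z = t - z + 1 by omega]
    rw [qfac_succ] at h3 ⊢
    rw [Nat.cast_sub (by omega), show (t : ℂ) - z + 1 = t + 1 - z by ring] at h3 ⊢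
    have h4 := left_ne_zero_of_mul h3
    have h5 := right_ne_zero_of_mul h3
    have h6 := qfac_ne_zero n z (by omega)
    field_simp
  rw [h1, h2, neg_mul, Finset.mul_sum, ← neg_add', ← Finset.sum_add_distrib]
  congr 1
  refine Finset.sum_congr rfl fun z _ => ?_
  have := qn_rel1 n (z : ℂ) ((t : ℂ) + 1 - z)
  rw [show (z : ℂ) + (t + 1 - z) = t + 1 by ring] at this
  rw [← this]
  ring

lemma Ssum_last (n k : ℕ) (a b c u v : ℂ) (hn : n ≠ 0)
    (h0 : qbin n (k : ℂ) u = 0) (h1 : qbin n (k : ℂ) (u - n) = 0) :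
    qn n (2 * a - u + 1) * xic n (c - ((n - 1 : ℕ) : ℂ)) * Ssum n k a b c (u - 1) v (n - 1)
      - qn n (2 * b - v + 1) * xic n (-(c - ((n - 1 : ℕ) : ℂ))) *
        Ssum n k a b c u (v - 1) (n - 1) = 0 := by
  rw [Ssum_left, Ssum_right, ← neg_add', neg_eq_zero, ← Finset.sum_add_distrib]
  have hz : ∀ z ∈ Finset.range (n - 1 + 1),
      Acom n k a b c u v (n - 1) (z + 1) * xic n ((z : ℂ) - ((n - 1 : ℕ) : ℂ)) /
          (qfac n z * qfac n (n - 1 - z)) +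
      Acom n k a b c u v (n - 1) z * xic n (z : ℂ) / (qfac n z * qfac n (n - 1 - z))
      = -(qfac n (n - 1))⁻¹ * ((fun z : ℕ => Acom n k a b c u v (n - 1) z * xic n (z : ℂ)) (z + 1) -
        (fun z : ℕ => Acom n k a b c u v (n - 1) z * xic n (z : ℂ)) z) := by
    intro z hz
    simp only [Finset.mem_range] at hz
    rw [qfac_mul_compl n z (by omega)]
    have : xic n ((z : ℂ) - ((n - 1 : ℕ) : ℂ)) = -xic n (((z + 1 : ℕ) : ℂ)) := by
      rw [Nat.cast_sub (by omega)]
      push_cast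
      rw [show (z : ℂ) - (n - 1) = z + 1 + (-(n : ℂ)) by ring, xic_add, xic_neg, xic_self n hn]
      norm_num
    simp only [this]
    ring
  rw [Finset.sum_congr rfl hz, ← Finset.mul_sum, Finset.sum_range_sub
    (fun z : ℕ => Acom n k a b c u v (n - 1) z * xic n (z : ℂ))]
  have hA0 : Acom n k a b c u v (n - 1) 0 = 0 := by
    unfold Acom
    simp [h0]
  have hA1 : Acom n k a b c u v (n - 1) (n - 1 + 1) = 0 := by
    unfold Acom
    rw [show n - 1 + 1 = n by omega, h1]
    simp
  simp [hA0, hA1]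

/-- Core of the Clebsch–Gordan coefficient (up to a constant factor). -/
def Wcore (n k : ℕ) (a b c u v : ℂ) (t : ℕ) : ℂ :=
  xic n ((n : ℂ) * (v - t) + (v * (2 * b - v + 1) - u * (2 * a - u + 1)) / 2) *
    (qfac n t / pd n (2 * c) t) * Ssum n k a b c u v t

/-- The constant factor. -/
def kap (n k : ℕ) (c : ℂ) : ℂ :=
  Complex.exp (Real.pi * Complex.I * (-(k : ℂ)) / 2) *
    (pd n (2 * c) (n - 1 - k) / qfac n (n - 1 - k))

lemma CG_eq (n k : ℕ) (hk : k < n) (a b c : ℂ) (hc : a + b - c = k) (u v t : ℕ) (ht : t < n) :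
    CG n a b c u v t = kap n k c * Wcore n k a b c u v t := by
  unfold CG kap Wcore Ssum
  rw [qbin_eq n (2 * c) (2 * c - t) t ht (by ring),
    qbin_eq n (2 * c) (a + b + c - ((n : ℂ) - 1)) (n - 1 - k) (by omega) (by
      rw [Nat.cast_sub (by omega), Nat.cast_sub (by omega)]
      push_cast
      linear_combination -hc)]
  rw [xic_add, show (n : ℂ) * ((v : ℂ) - t) = (n : ℂ) * (((v : ℤ) - (t : ℤ) : ℤ) : ℂ) by
    push_cast; ring, xic_nmul n (by omega), inv_div,
    show c - a - b = -(k : ℂ) by linear_combination -hc, hc]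
  have : ∀ z ∈ Finset.range (t + 1),
      (-1 : ℂ) ^ z * xic n ((2 * (z : ℂ) - (t : ℂ)) * (2 * c - (t : ℂ) + 1) / 2) *
      qbin n (k : ℂ) ((u : ℂ) - (z : ℂ)) *
      qbin n (2 * a - (u : ℂ) + (z : ℂ)) (2 * a - (u : ℂ)) *
      qbin n (2 * b - (v : ℂ) + ((t : ℂ) - (z : ℂ))) (2 * b - (v : ℂ)) =
      (-1 : ℂ) ^ z * xic n ((2 * (z : ℂ) - t) * (2 * c - t + 1) / 2) *
      qbin n (k : ℂ) (u - z) *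
      (pd n (2 * a - u + z) z / qfac n z) *
      (pd n (2 * b - v + ((t : ℂ) - z)) (t - z) / qfac n (t - z)) := by
    intro z hz
    simp only [Finset.mem_range] at hz
    rw [qbin_eq n (2 * a - (u : ℂ) + (z : ℂ)) _ z (by omega) (by ring),
      qbin_eq n (2 * b - (v : ℂ) + ((t : ℂ) - (z : ℂ))) _ (t - z) (by omega) (by
        rw [Nat.cast_sub (by omega)]; ring)]
  rw [Finset.sum_congr rfl this]
  ring

lemma Ssum_zero_left (n k : ℕ) (a b c v : ℂ) (t : ℕ) : Ssum n k a b c (-1) v t = 0 := by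
  unfold Ssum
  refine Finset.sum_eq_zero fun z _ => ?_
  rw [qbin_nat_zero n k z _ (by ring)]
  ring

lemma Ssum_zero_right (n k : ℕ) (a b c u : ℂ) (t : ℕ) (h : u = t + k + 1) :
    Ssum n k a b c u (-1) t = 0 := by
  unfold Ssum
  refine Finset.sum_eq_zero fun z hz => ?_
  simp only [Finset.mem_range] at hz
  rw [qbin_zero_of_neg n k _ (t - z) (by rw [h, Nat.cast_sub (by omega)]; ring)]
  ring

lemma Wcore_phase (n k : ℕ) (hn : n ≠ 0) (a b c u v : ℂ) (t : ℕ) (hc : a + b - c = k)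
    (huv : u + v = t + 1 + k) :
    qn n (2 * a - u + 1) * xic n (b - v) * Wcore n k a b c (u - 1) v t
      + xic n (-(a - u)) * qn n (2 * b - v + 1) * Wcore n k a b c u (v - 1) t
    = xic n ((n : ℂ) * (v - t) + (v * (2 * b - v + 1) - u * (2 * a - u + 1)) / 2) *
      (qfac n t / pd n (2 * c) t) *
      (qn n (2 * a - u + 1) * xic n (c - t) * Ssum n k a b c (u - 1) v t
      - qn n (2 * b - v + 1) * xic n (-(c - t)) * Ssum n k a b c u (v - 1) t) := by
  unfold Wcore
  have e1 : xic n (b - v) *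
      xic n ((n : ℂ) * (v - t) + (v * (2 * b - v + 1) - (u - 1) * (2 * a - (u - 1) + 1)) / 2)
      = xic n ((n : ℂ) * (v - t) + (v * (2 * b - v + 1) - u * (2 * a - u + 1)) / 2) *
        xic n (c - t) := by
    rw [← xic_add, ← xic_add]
    congr 1
    linear_combination hc - huv
  have e2 : xic n (-(a - u)) *
      xic n ((n : ℂ) * (v - 1 - t) +
        ((v - 1) * (2 * b - (v - 1) + 1) - u * (2 * a - u + 1)) / 2)
      = -(xic n ((n : ℂ) * (v - t) + (v * (2 * b - v + 1) - u * (2 * a - u + 1)) / 2) *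
        xic n (-(c - t))) := by
    rw [← xic_add, ← xic_add, neg_xic' n hn]
    congr 1
    linear_combination huv - hc
  linear_combination (qn n (2 * a - u + 1) * (qfac n t / pd n (2 * c) t) *
      Ssum n k a b c (u - 1) v t) * e1 + (qn n (2 * b - v + 1) * (qfac n t / pd n (2 * c) t) *
      Ssum n k a b c u (v - 1) t) * e2

lemma Wcore_rec (n k : ℕ) (a b c u v : ℂ) (t : ℕ) (ht : t + 1 < n) (hc : a + b - c = k)
    (hcn : ∀ m : ℤ, 2 * c ≠ m) (huv : u + v = t + 1 + k) :
    qn n (2 * a - u + 1) * xic n (b - v) * Wcore n k a b c (u - 1) v t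
      + xic n (-(a - u)) * qn n (2 * b - v + 1) * Wcore n k a b c u (v - 1) t
    = qn n (2 * c - t) * Wcore n k a b c u v (t + 1) := by
  rw [Wcore_phase n k (by omega) a b c u v t hc huv, Ssum_rec n k a b c u v t ht]
  unfold Wcore
  have h1 := pd_ne_zero n (by omega) (2 * c) hcn (t + 1)
  rw [pd_succ] at h1 ⊢
  have h2 := left_ne_zero_of_mul h1
  have h3 := right_ne_zero_of_mul h1
  rw [qfac_succ]
  have e : xic n ((n : ℂ) * (v - t) + (v * (2 * b - v + 1) - u * (2 * a - u + 1)) / 2) =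
      -xic n ((n : ℂ) * (v - (t + 1 : ℕ)) + (v * (2 * b - v + 1) - u * (2 * a - u + 1)) / 2) := by
    rw [neg_eq_neg_one_mul, show (-1 : ℂ) = xic n (n : ℂ) by
      rw [xic_self n (by omega)]]
    rw [← xic_add]
    congr 1
    push_cast
    ring
  rw [e]
  field_simp

lemma Wcore_last (n k : ℕ) (hn : n ≠ 0) (a b c : ℂ) (u v : ℕ) (hc : a + b - c = k)
    (hu : u < n) (hv : v < n) (huv : u + v = n + k) :
    qn n (2 * a - u + 1) * xic n (b - v) * Wcore n k a b c (u - 1) v (n - 1)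
      + xic n (-(a - u)) * qn n (2 * b - v + 1) * Wcore n k a b c u (v - 1) (n - 1) = 0 := by
  have huv' : (u : ℂ) + v = n + k := by exact_mod_cast huv
  rw [Wcore_phase n k hn a b c u v (n - 1) hc (by
    rw [huv', Nat.cast_sub (by omega)]; push_cast; ring), Ssum_last n k a b c u v hn, mul_zero]
  · refine qbin_zero_of_neg n _ _ (u - k - 1) ?_
    rw [Nat.cast_sub (by omega), Nat.cast_sub (by omega)]
    push_cast
    ring
  · refine qbin_nat_zero n k (n - u - 1) _ ?_
    rw [Nat.cast_sub (by omega), Nat.cast_sub (by omega)]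
    push_cast
    ring

lemma Wcore_top (n k : ℕ) (hk : k < n) (a b c : ℂ) (u v : ℕ) (hc : a + b - c = k)
    (huv : u + v + 1 = k) :
    qn n ((u : ℂ) + 1) * xic n (b - v) * Wcore n k a b c ((u : ℂ) + 1) v 0
      + xic n (-(a - u)) * qn n ((v : ℂ) + 1) * Wcore n k a b c u ((v : ℂ) + 1) 0 = 0 := by
  have huv' : (u : ℂ) + v + 1 = k := by exact_mod_cast huv
  unfold Wcore Ssum
  simp only [zero_add, Finset.sum_range_one, pow_zero, Nat.cast_zero, sub_zero, Nat.sub_self, pd_zero, qfac_zero,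
    mul_zero, zero_mul, zero_div, xic_zero, mul_one, one_mul, div_one]
  have hb1 := qbin_nat n k (u + 1) hk (by omega)
  have hb2 := qbin_nat n k u hk (by omega)
  rw [show k - (u + 1) = v by omega] at hb1
  rw [show k - u = v + 1 by omega] at hb2
  push_cast at hb1
  rw [hb1, hb2]
  have h1 := qfac_ne_zero n (u + 1) (by omega)
  have h2 := qfac_ne_zero n (v + 1) (by omega)
  rw [qfac_succ] at h1 h2 ⊢
  rw [qfac_succ]
  have h3 := left_ne_zero_of_mul h1
  have h4 := right_ne_zero_of_mul h1
  have h5 := left_ne_zero_of_mul h2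
  have h6 := right_ne_zero_of_mul h2
  have e : xic n (-(a - u)) * xic n ((n : ℂ) * ((v : ℂ) + 1) +
        (((v : ℂ) + 1) * (2 * b - ((v : ℂ) + 1) + 1) - u * (2 * a - u + 1)) / 2) =
      -(xic n (b - v) * xic n ((n : ℂ) * (v : ℂ) +
        ((v : ℂ) * (2 * b - v + 1) - ((u : ℂ) + 1) * (2 * a - ((u : ℂ) + 1) + 1)) / 2)) := by
    rw [← xic_add, ← xic_add, neg_xic n (by omega)]
    congr 1
    ring
  generalize xic n ((n : ℂ) * ((v : ℂ) + 1) +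
        (((v : ℂ) + 1) * (2 * b - ((v : ℂ) + 1) + 1) - u * (2 * a - u + 1)) / 2) = X at e ⊢
  generalize xic n ((n : ℂ) * (v : ℂ) +
        ((v : ℂ) * (2 * b - v + 1) - ((u : ℂ) + 1) * (2 * a - ((u : ℂ) + 1) + 1)) / 2) = Y at e ⊢
  field_simp
  linear_combination qfac n k * e


/-! ### Matrices -/

lemma Kmat_sum (n : ℕ) (b : ℂ) (v : Fin n) (g : Fin n → ℂ) :
    ∑ j, Kmat n b v j * g j = xic n (b - ((v : ℕ) : ℂ)) * g v := by
  simp [Kmat]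

lemma Kinvmat_sum (n : ℕ) (b : ℂ) (v : Fin n) (g : Fin n → ℂ) :
    ∑ j, Kinvmat n b v j * g j = xic n (-(b - ((v : ℕ) : ℂ))) * g v := by
  simp [Kinvmat]

lemma Fmat_sum (n : ℕ) (a : ℂ) (u : Fin n) (G : ℂ → ℂ) (hG : G (-1) = 0) :
    ∑ j : Fin n, Fmat n a u j * G ((j : ℕ) : ℂ) =
      qint n (2 * a - ((u : ℕ) : ℂ) + 1) * G (((u : ℕ) : ℂ) - 1) := by
  rcases Nat.eq_zero_or_pos (u : ℕ) with h | h
  · rw [h]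
    simp only [Nat.cast_zero, zero_sub, hG, mul_zero]
    refine Finset.sum_eq_zero fun j _ => ?_
    simp [Fmat, h]
  · rw [Finset.sum_eq_single (⟨(u : ℕ) - 1, by omega⟩ : Fin n)]
    · simp only [Fmat, Matrix.of_apply]
      rw [if_pos (by omega), Nat.cast_sub (by omega)]
      push_cast
      congr 2
      ring
    · intro j _ hj
      simp only [Fmat, Matrix.of_apply]
      rw [if_neg, zero_mul]
      intro h2
      apply hj
      ext
      simp
      omega
    · simp

lemma Emat_sum (n : ℕ) (u : Fin n) (G : ℂ → ℂ) :
    ∑ j : Fin n, Emat n u j * G ((j : ℕ) : ℂ) =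
      qint n (((u : ℕ) : ℂ) + 1) * G (((u : ℕ) : ℂ) + 1) := by
  have hu := u.2
  by_cases h : (u : ℕ) + 1 < n
  · rw [Finset.sum_eq_single (⟨(u : ℕ) + 1, by omega⟩ : Fin n)]
    · simp only [Emat, Matrix.of_apply]
      rw [if_pos trivial]
      push_cast
      rfl
    · intro j _ hj
      simp only [Emat, Matrix.of_apply]
      rw [if_neg, zero_mul]
      intro h2
      apply hj
      ext
      simp [h2]
    · simp
  · have h1 : ((u : ℕ) : ℂ) + 1 = n := by
      have : (u : ℕ) + 1 = n := by omega
      exact_mod_cast this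
    rw [h1, qint, qn_self n (by omega), zero_div, zero_mul]
    refine Finset.sum_eq_zero fun j _ => ?_
    have := j.2
    simp only [Emat, Matrix.of_apply]
    rw [if_neg (by omega), zero_mul]

/-- Coproduct of `E`. -/
def dE (n : ℕ) (a b : ℂ) : Matrix (Fin n × Fin n) (Fin n × Fin n) ℂ :=
  Emat n ⊗ₖ Kmat n b + Kinvmat n a ⊗ₖ Emat n

/-- Coproduct of `F`. -/
def dF (n : ℕ) (a b : ℂ) : Matrix (Fin n × Fin n) (Fin n × Fin n) ℂ :=
  Fmat n a ⊗ₖ Kmat n b + Kinvmat n a ⊗ₖ Fmat n b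

lemma dF_mul_apply (n : ℕ) (a b : ℂ) (Y : Matrix (Fin n × Fin n) (Fin n) ℂ)
    (f : ℂ → ℂ → ℕ → ℂ) (hY : ∀ p t, Y p t = f ((p.1 : ℕ) : ℂ) ((p.2 : ℕ) : ℂ) (t : ℕ))
    (t u v : Fin n) (h1 : f (-1) ((v : ℕ) : ℂ) t = 0) (h2 : f ((u : ℕ) : ℂ) (-1) t = 0) :
    (dF n a b * Y) (u, v) t =
      qint n (2 * a - ((u : ℕ) : ℂ) + 1) * (xic n (b - ((v : ℕ) : ℂ)) *
        f (((u : ℕ) : ℂ) - 1) ((v : ℕ) : ℂ) t) +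
      xic n (-(a - ((u : ℕ) : ℂ))) * (qint n (2 * b - ((v : ℕ) : ℂ) + 1) *
        f ((u : ℕ) : ℂ) (((v : ℕ) : ℂ) - 1) t) := by
  unfold dF
  rw [Matrix.add_mul, Matrix.add_apply, Matrix.mul_apply, Matrix.mul_apply,
    Fintype.sum_prod_type, Fintype.sum_prod_type]
  simp only [Matrix.kroneckerMap_apply, hY, mul_assoc]
  simp only [← Finset.mul_sum]
  congr 1
  · rw [← Fmat_sum n a u (fun x => xic n (b - ((v : ℕ) : ℂ)) * f x ((v : ℕ) : ℂ) t) (by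
      simp [h1])]
    refine Finset.sum_congr rfl fun x _ => ?_
    rw [Kmat_sum n b v (fun j => f ((x : ℕ) : ℂ) ((j : ℕ) : ℂ) t)]
  · rw [Kinvmat_sum n a u (fun x => ∑ i : Fin n, Fmat n b v i * f ((x : ℕ) : ℂ) ((i : ℕ) : ℂ) t)]
    rw [Fmat_sum n b v (fun y => f ((u : ℕ) : ℂ) y t) h2]

lemma dE_mul_apply (n : ℕ) (a b : ℂ) (Y : Matrix (Fin n × Fin n) (Fin n) ℂ)
    (f : ℂ → ℂ → ℕ → ℂ) (hY : ∀ p t, Y p t = f ((p.1 : ℕ) : ℂ) ((p.2 : ℕ) : ℂ) (t : ℕ))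
    (t u v : Fin n) :
    (dE n a b * Y) (u, v) t =
      qint n (((u : ℕ) : ℂ) + 1) * (xic n (b - ((v : ℕ) : ℂ)) *
        f (((u : ℕ) : ℂ) + 1) ((v : ℕ) : ℂ) t) +
      xic n (-(a - ((u : ℕ) : ℂ))) * (qint n (((v : ℕ) : ℂ) + 1) *
        f ((u : ℕ) : ℂ) (((v : ℕ) : ℂ) + 1) t) := by
  unfold dE
  rw [Matrix.add_mul, Matrix.add_apply, Matrix.mul_apply, Matrix.mul_apply,
    Fintype.sum_prod_type, Fintype.sum_prod_type]
  simp only [Matrix.kroneckerMap_apply, hY, mul_assoc]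
  simp only [← Finset.mul_sum]
  congr 1
  · rw [← Emat_sum n u (fun x => xic n (b - ((v : ℕ) : ℂ)) * f x ((v : ℕ) : ℂ) t)]
    refine Finset.sum_congr rfl fun x _ => ?_
    rw [Kmat_sum n b v (fun j => f ((x : ℕ) : ℂ) ((j : ℕ) : ℂ) t)]
  · rw [Kinvmat_sum n a u (fun x => ∑ i : Fin n, Emat n v i * f ((x : ℕ) : ℂ) ((i : ℕ) : ℂ) t)]
    rw [Emat_sum n v (fun y => f ((u : ℕ) : ℂ) y t)]

lemma mul_Fmat_apply {ι : Type*} (n : ℕ) (c : ℂ) (Y : Matrix ι (Fin n) ℂ) (p : ι) (t : Fin n) :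
    (Y * Fmat n c) p t = if h : (t : ℕ) + 1 < n then
      Y p ⟨(t : ℕ) + 1, h⟩ * qint n (2 * c - ((t : ℕ) : ℂ)) else 0 := by
  rw [Matrix.mul_apply]
  split_ifs with h
  · rw [Finset.sum_eq_single (⟨(t : ℕ) + 1, h⟩ : Fin n)]
    · simp [Fmat]
    · intro j _ hj
      simp only [Fmat, Matrix.of_apply]
      rw [if_neg, mul_zero]
      intro h2
      apply hj
      ext
      simp [h2]
    · simp
  · refine Finset.sum_eq_zero fun j _ => ?_
    have := j.2
    simp only [Fmat, Matrix.of_apply]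
    rw [if_neg (by omega), mul_zero]

open Classical in
/-- Entries of `Yinc` with complex indices. -/
def fY (n k : ℕ) (a b c : ℂ) (u v : ℂ) (t : ℕ) : ℂ :=
  if u + v - t = k then kap n k c * Wcore n k a b c u v t else 0

lemma Yinc_eq (n k : ℕ) (hk : k < n) (a b c : ℂ) (hc : a + b - c = k) (p : Fin n × Fin n)
    (t : Fin n) : Yinc n a b c p t = fY n k a b c ((p.1 : ℕ) : ℂ) ((p.2 : ℕ) : ℂ) (t : ℕ) := by
  unfold Yinc fY
  simp only [Matrix.of_apply]
  rw [hc, CG_eq n k hk a b c hc _ _ _ t.2]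

lemma fY_left (n k : ℕ) (a b c : ℂ) (v : ℂ) (t : ℕ) : fY n k a b c (-1) v t = 0 := by
  unfold fY Wcore
  rw [Ssum_zero_left]
  simp

lemma fY_right (n k : ℕ) (a b c : ℂ) (u : ℂ) (t : ℕ) : fY n k a b c u (-1) t = 0 := by
  unfold fY Wcore
  split_ifs with h
  · rw [Ssum_zero_right n k a b c u t (by linear_combination h)]
    simp
  · rfl

lemma Yinc_F (n k : ℕ) (hk : k < n) (a b c : ℂ) (hc : a + b - c = k)
    (hcn : ∀ m : ℤ, 2 * c ≠ m) :
    dF n a b * Yinc n a b c = Yinc n a b c * Fmat n c := by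
  ext ⟨u, v⟩ t
  rw [dF_mul_apply n a b _ _ (Yinc_eq n k hk a b c hc) t u v (fY_left ..) (fY_right ..),
    mul_Fmat_apply]
  by_cases hs : (((u : ℕ) : ℂ) + ((v : ℕ) : ℂ) = ((t : ℕ) : ℂ) + 1 + k)
  · have hs1 : fY n k a b c (((u : ℕ) : ℂ) - 1) ((v : ℕ) : ℂ) t =
        kap n k c * Wcore n k a b c (((u : ℕ) : ℂ) - 1) ((v : ℕ) : ℂ) t := by
      unfold fY
      rw [if_pos (by linear_combination hs)]
    have hs2 : fY n k a b c ((u : ℕ) : ℂ) (((v : ℕ) : ℂ) - 1) t =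
        kap n k c * Wcore n k a b c ((u : ℕ) : ℂ) (((v : ℕ) : ℂ) - 1) t := by
      unfold fY
      rw [if_pos (by linear_combination hs)]
    rw [hs1, hs2]
    unfold qint
    split_ifs with h
    · rw [Yinc_eq n k hk a b c hc]
      have hs3 : fY n k a b c ((u : ℕ) : ℂ) ((v : ℕ) : ℂ) ((t : ℕ) + 1) =
        kap n k c * Wcore n k a b c ((u : ℕ) : ℂ) ((v : ℕ) : ℂ) ((t : ℕ) + 1) := by
        unfold fY
        rw [if_pos (by push_cast; linear_combination hs)]
      simp only [hs3]
      have := Wcore_rec n k a b c ((u : ℕ) : ℂ) ((v : ℕ) : ℂ) t h hc hcn hs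
      linear_combination (kap n k c / qn n 1) * this
    · have ht : (t : ℕ) = n - 1 := by have := t.2; omega
      have hs' : (u : ℕ) + v = n + k := by
        have : (u : ℕ) + v = t + 1 + k := by exact_mod_cast hs
        omega
      have := Wcore_last n k (by omega) a b c u v hc u.2 v.2 hs'
      rw [ht]
      linear_combination (kap n k c / qn n 1) * this
  · have hs1 : fY n k a b c (((u : ℕ) : ℂ) - 1) ((v : ℕ) : ℂ) t = 0 := by
      unfold fY
      rw [if_neg (fun h => hs (by linear_combination h))]
    have hs2 : fY n k a b c ((u : ℕ) : ℂ) (((v : ℕ) : ℂ) - 1) t = 0 := by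
      unfold fY
      rw [if_neg (fun h => hs (by linear_combination h))]
    rw [hs1, hs2]
    split_ifs with h
    · rw [Yinc_eq n k hk a b c hc]
      have hs3 : fY n k a b c ((u : ℕ) : ℂ) ((v : ℕ) : ℂ) ((t : ℕ) + 1) = 0 := by
        unfold fY
        rw [if_neg (fun h => hs (by push_cast at h; linear_combination h))]
      simp [hs3]
    · simp

lemma Yinc_E_zero (n k : ℕ) (hk : k < n) (a b c : ℂ) (hc : a + b - c = k)
    (p : Fin n × Fin n) (t : Fin n) (ht : (t : ℕ) = 0) :
    (dE n a b * Yinc n a b c) p t = 0 := by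
  obtain ⟨u, v⟩ := p
  rw [dE_mul_apply n a b _ _ (Yinc_eq n k hk a b c hc) t u v, ht]
  by_cases hs : (((u : ℕ) : ℂ) + ((v : ℕ) : ℂ) + 1 = k)
  · have hs1 : fY n k a b c (((u : ℕ) : ℂ) + 1) ((v : ℕ) : ℂ) 0 =
        kap n k c * Wcore n k a b c (((u : ℕ) : ℂ) + 1) ((v : ℕ) : ℂ) 0 := by
      unfold fY
      rw [if_pos (by push_cast; linear_combination hs)]
    have hs2 : fY n k a b c ((u : ℕ) : ℂ) (((v : ℕ) : ℂ) + 1) 0 =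
        kap n k c * Wcore n k a b c ((u : ℕ) : ℂ) (((v : ℕ) : ℂ) + 1) 0 := by
      unfold fY
      rw [if_pos (by push_cast; linear_combination hs)]
    rw [hs1, hs2]
    unfold qint
    have := Wcore_top n k hk a b c u v hc (by exact_mod_cast hs)
    linear_combination (kap n k c / qn n 1) * this
  · have hs1 : fY n k a b c (((u : ℕ) : ℂ) + 1) ((v : ℕ) : ℂ) 0 = 0 := by
      unfold fY
      rw [if_neg (fun h => hs (by push_cast at h; linear_combination h))]
    have hs2 : fY n k a b c ((u : ℕ) : ℂ) (((v : ℕ) : ℂ) + 1) 0 = 0 := by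
      unfold fY
      rw [if_neg (fun h => hs (by push_cast at h; linear_combination h))]
    rw [hs1, hs2]
    simp

/-! Commutation relations -/

/-- Diagonal matrix of `(K² - K⁻²)/{1}` -/
def Hmat (n : ℕ) (a : ℂ) : Matrix (Fin n) (Fin n) ℂ :=
  Matrix.diagonal fun i => qint n (2 * (a - ((i : ℕ) : ℂ)))

lemma qn_rel3 (n : ℕ) (z w : ℂ) :
    qn n (z + 1) * qn n (w - z) - qn n z * qn n (w - z + 1) = qn n 1 * qn n (w - 2 * z) := by
  have h1 := xic_ne_zero n z
  have h2 := xic_ne_zero n w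
  have h3 := xic_ne_zero n 1
  unfold qn
  rw [show w - 2 * z = w + -z + -z by ring, show w - z + 1 = w + -z + 1 by ring,
    show w - z = w + -z by ring]
  simp only [neg_add, xic_add, xic_neg, neg_neg]
  field_simp
  ring

lemma EF_comm (n : ℕ) (hn : 2 ≤ n) (a : ℂ) :
    Emat n * Fmat n a = Fmat n a * Emat n + Hmat n a := by
  have h1 : qn n 1 ≠ 0 := by
    have := qn_nat_ne_zero n 1 (by omega) (by omega)
    simpa using this
  ext i j
  rw [Matrix.add_apply, mul_Fmat_apply, Matrix.mul_apply]
  have hFE : ∑ x, Fmat n a i x * Emat n x j =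
      if i = j then qint n (2 * a - ((i : ℕ) : ℂ) + 1) * qint n ((i : ℕ) : ℂ) else 0 := by
    have := Fmat_sum n a i (fun x => if ((j : ℕ) : ℂ) = x + 1 then qint n ((j : ℕ) : ℂ) else 0) (by
      split_ifs with h
      · rw [h]; simp [qint, qn_zero]
      · rfl)
    rw [show (∑ x, Fmat n a i x * Emat n x j) = ∑ x : Fin n, Fmat n a i x *
      (fun x : ℂ => if ((j : ℕ) : ℂ) = x + 1 then qint n ((j : ℕ) : ℂ) else 0) ((x : ℕ) : ℂ) from ?_,
      this]
    · simp only [sub_add_cancel]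
      by_cases h : i = j
      · subst h; simp
      · rw [if_neg h, if_neg, mul_zero]
        intro h2
        apply h
        ext
        exact_mod_cast h2.symm
    · refine Finset.sum_congr rfl fun x _ => ?_
      simp only [Emat, Matrix.of_apply]
      congr 1
      refine if_congr ?_ rfl rfl
      norm_cast
  rw [hFE]
  have key := qn_rel3 n ((i : ℕ) : ℂ) (2 * a)
  by_cases hij : i = j
  · subst hij
    simp only [Hmat, Matrix.diagonal_apply_eq, if_true]
    have hi := i.2
    split_ifs with h
    · simp only [Emat, Matrix.of_apply, if_true]
      unfold qint
      rw [show 2 * (a - ((i : ℕ) : ℂ)) = 2 * a - 2 * (i : ℕ) by ring]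
      push_cast
      field_simp
      rw [show 2 * (a - ((i : ℕ) : ℂ)) = 2 * a - 2 * (i : ℕ) by ring]
      linear_combination key
    · have h2 : ((i : ℕ) : ℂ) + 1 = n := by
        have : (i : ℕ) + 1 = n := by omega
        exact_mod_cast this
      rw [h2, qn_self n (by omega)] at key
      unfold qint
      rw [show 2 * (a - ((i : ℕ) : ℂ)) = 2 * a - 2 * (i : ℕ) by ring]
      field_simp
      rw [show 2 * (a - ((i : ℕ) : ℂ)) = 2 * a - 2 * (i : ℕ) by ring]
      linear_combination key
  · simp only [Hmat, Matrix.diagonal_apply_ne _ hij, if_neg hij, add_zero]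
    split_ifs with h
    · simp only [Emat, Matrix.of_apply]
      rw [if_neg, zero_mul]
      intro h2
      apply hij
      ext
      omega
    · rfl

lemma K_eq (n : ℕ) (a : ℂ) : Kmat n a = Matrix.diagonal fun i : Fin n => xic n (a - ((i : ℕ) : ℂ)) := by
  ext i j
  simp [Kmat, Matrix.diagonal_apply]

lemma Kinv_eq (n : ℕ) (a : ℂ) :
    Kinvmat n a = Matrix.diagonal fun i : Fin n => xic n (-(a - ((i : ℕ) : ℂ))) := by
  ext i j
  simp [Kinvmat, Matrix.diagonal_apply]

lemma KinvF (n : ℕ) (a : ℂ) : Kinvmat n a * Fmat n a = xic n 1 • (Fmat n a * Kinvmat n a) := by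
  ext i j
  rw [Kinv_eq, Matrix.diagonal_mul, Matrix.smul_apply, Matrix.mul_diagonal]
  simp only [Fmat, Matrix.of_apply, smul_eq_mul]
  split_ifs with h
  · rw [h]
    push_cast
    rw [show -(a - (((j : ℕ) : ℂ) + 1)) = 1 + -(a - ((j : ℕ) : ℂ)) by ring, xic_add]
    ring
  · simp

lemma EKinv (n : ℕ) (a : ℂ) : Emat n * Kinvmat n a = xic n 1 • (Kinvmat n a * Emat n) := by
  ext i j
  rw [Kinv_eq, Matrix.mul_diagonal, Matrix.smul_apply, Matrix.diagonal_mul]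
  simp only [Emat, Matrix.of_apply, smul_eq_mul]
  split_ifs with h
  · rw [h]
    push_cast
    rw [show -(a - (((i : ℕ) : ℂ) + 1)) = 1 + -(a - ((i : ℕ) : ℂ)) by ring, xic_add]
    ring
  · simp

lemma KE (n : ℕ) (a : ℂ) : Kmat n a * Emat n = xic n 1 • (Emat n * Kmat n a) := by
  ext i j
  rw [K_eq, Matrix.diagonal_mul, Matrix.smul_apply, Matrix.mul_diagonal]
  simp only [Emat, Matrix.of_apply, smul_eq_mul]
  split_ifs with h
  · rw [h]
    push_cast
    rw [show (a - ((i : ℕ) : ℂ)) = 1 + (a - (((i : ℕ) : ℂ) + 1)) by ring, xic_add]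
    ring
  · simp

lemma FK (n : ℕ) (a : ℂ) : Fmat n a * Kmat n a = xic n 1 • (Kmat n a * Fmat n a) := by
  ext i j
  rw [K_eq, Matrix.mul_diagonal, Matrix.smul_apply, Matrix.diagonal_mul]
  simp only [Fmat, Matrix.of_apply, smul_eq_mul]
  split_ifs with h
  · rw [h]
    push_cast
    rw [show (a - ((j : ℕ) : ℂ)) = 1 + (a - (((j : ℕ) : ℂ) + 1)) by ring, xic_add]
    ring
  · simp

/-- Coproduct of `(K² - K⁻²)/{1}` -/
def dH (n : ℕ) (a b : ℂ) : Matrix (Fin n × Fin n) (Fin n × Fin n) ℂ :=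
  Matrix.diagonal fun p => qint n (2 * (a + b - ((p.1 : ℕ) : ℂ) - ((p.2 : ℕ) : ℂ)))

lemma H_kron (n : ℕ) (a b : ℂ) :
    Hmat n a ⊗ₖ (Kmat n b * Kmat n b) + (Kinvmat n a * Kinvmat n a) ⊗ₖ Hmat n b = dH n a b := by
  rw [K_eq, Kinv_eq, Matrix.diagonal_mul_diagonal, Matrix.diagonal_mul_diagonal]
  unfold Hmat dH
  rw [Matrix.diagonal_kronecker_diagonal, Matrix.diagonal_kronecker_diagonal,
    Matrix.diagonal_add]
  congr 1
  ext p
  unfold qint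
  have := qn_rel1 n (2 * (a - ((p.1 : ℕ) : ℂ))) (2 * (b - ((p.2 : ℕ) : ℂ)))
  have h2 := qn_rel1 n (2 * (b - ((p.2 : ℕ) : ℂ))) (2 * (a - ((p.1 : ℕ) : ℂ)))
  rw [show 2 * (a + b - ((p.1 : ℕ) : ℂ) - ((p.2 : ℕ) : ℂ)) =
    2 * (b - ((p.2 : ℕ) : ℂ)) + 2 * (a - ((p.1 : ℕ) : ℂ)) by ring, ← h2,
    ← xic_add, ← xic_add]
  rw [show b - ((p.2 : ℕ) : ℂ) + (b - ((p.2 : ℕ) : ℂ)) = 2 * (b - ((p.2 : ℕ) : ℂ)) by ring,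
    show -(a - ((p.1 : ℕ) : ℂ)) + -(a - ((p.1 : ℕ) : ℂ)) = -(2 * (a - ((p.1 : ℕ) : ℂ))) by ring]
  ring

lemma dEF_comm (n : ℕ) (hn : 2 ≤ n) (a b : ℂ) :
    dE n a b * dF n a b = dF n a b * dE n a b + dH n a b := by
  unfold dE dF
  rw [← H_kron]
  simp only [Matrix.add_mul, Matrix.mul_add, ← Matrix.mul_kronecker_mul]
  rw [EF_comm n hn a, EF_comm n hn b, EKinv, KinvF, KE, FK]
  simp only [Matrix.add_kronecker, Matrix.kronecker_add, Matrix.smul_kronecker,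
    Matrix.kronecker_smul]
  abel

lemma Yinc_H (n k : ℕ) (hk : k < n) (a b c : ℂ) (hc : a + b - c = k) :
    dH n a b * Yinc n a b c = Yinc n a b c * Hmat n c := by
  ext ⟨u, v⟩ t
  unfold dH Hmat
  rw [Matrix.diagonal_mul, Matrix.mul_diagonal, Yinc_eq n k hk a b c hc]
  unfold fY
  split_ifs with h
  · simp only at h ⊢
    rw [show a + b - ((u : ℕ) : ℂ) - ((v : ℕ) : ℂ) = c - ((t : ℕ) : ℂ) by
      linear_combination hc - h]
    ring
  · simp

lemma Yinc_E (n k : ℕ) (hn : 2 ≤ n) (hk : k < n) (a b c : ℂ) (hc : a + b - c = k)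
    (hcn : ∀ m : ℤ, 2 * c ≠ m) :
    dE n a b * Yinc n a b c = Yinc n a b c * Emat n := by
  rw [← sub_eq_zero]
  set M := dE n a b * Yinc n a b c - Yinc n a b c * Emat n with hM
  have hF := Yinc_F n k hk a b c hc hcn
  have hH := Yinc_H n k hk a b c hc
  have hMF : M * Fmat n c = dF n a b * M := by
    rw [hM, Matrix.sub_mul, Matrix.mul_sub, Matrix.mul_assoc, ← hF, ← Matrix.mul_assoc,
      dEF_comm n hn, Matrix.add_mul, hH, Matrix.mul_assoc, Matrix.mul_assoc, EF_comm n hn,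
      Matrix.mul_add, ← Matrix.mul_assoc (Yinc n a b c) (Fmat n c), ← hF, Matrix.mul_assoc]
    abel
  have h1 : qn n 1 ≠ 0 := by
    have := qn_nat_ne_zero n 1 (by omega) (by omega)
    simpa using this
  have hcol : ∀ t : ℕ, ∀ ht : t < n, ∀ p, M p ⟨t, ht⟩ = 0 := by
    intro t
    induction t with
    | zero =>
      intro ht p
      rw [hM, Matrix.sub_apply, Yinc_E_zero n k hk a b c hc p _ rfl, Matrix.mul_apply, zero_sub,
        neg_eq_zero]
      refine Finset.sum_eq_zero fun j _ => ?_
      simp [Emat]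
    | succ t ih =>
      intro ht p
      have h2 : (M * Fmat n c) p ⟨t, by omega⟩ = 0 := by
        rw [hMF, Matrix.mul_apply]
        refine Finset.sum_eq_zero fun j _ => ?_
        rw [ih (by omega), mul_zero]
      rw [mul_Fmat_apply, dif_pos ht] at h2
      refine (mul_eq_zero.mp h2).resolve_right ?_
      unfold qint
      refine div_ne_zero (qn_ne_zero_of_not_int n (by omega) _ fun m hm => hcn (m + t) ?_) h1
      push_cast
      linear_combination hm
  ext p t
  exact hcol t t.2 p


/-! ### Duality -/

/-- Reversal of tensor factors and indices. -/
def sig (n : ℕ) : Fin n × Fin n ≃ Fin n × Fin n where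
  toFun p := (Fin.rev p.2, Fin.rev p.1)
  invFun p := (Fin.rev p.2, Fin.rev p.1)
  left_inv p := by simp
  right_inv p := by simp

lemma rev_cast (n : ℕ) (i : Fin n) : ((Fin.rev i : ℕ) : ℂ) = (n : ℂ) - 1 - ((i : ℕ) : ℂ) := by
  rw [Fin.val_rev, Nat.cast_sub (by omega)]
  push_cast
  ring

lemma Fmat_rev (n : ℕ) (a : ℂ) (i j : Fin n) :
    Fmat n ((n : ℂ) - 1 - a) (Fin.rev j) (Fin.rev i) = Fmat n a i j := by
  have hi := i.2
  have hj := j.2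
  simp only [Fmat, Matrix.of_apply]
  rw [rev_cast, Fin.val_rev, Fin.val_rev]
  by_cases h : (i : ℕ) = j + 1
  · rw [if_pos (by omega), if_pos h]
    unfold qint
    congr 1
    rw [h, ← qn_n_sub n (by omega)]
    congr 1
    push_cast
    ring
  · rw [if_neg (by omega), if_neg h]

lemma Emat_rev (n : ℕ) (i j : Fin n) :
    Emat n (Fin.rev j) (Fin.rev i) = Emat n i j := by
  have hi := i.2
  have hj := j.2
  simp only [Emat, Matrix.of_apply]
  rw [rev_cast, Fin.val_rev, Fin.val_rev]
  by_cases h : (j : ℕ) = i + 1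
  · rw [if_pos (by omega), if_pos h]
    unfold qint
    congr 1
    rw [h, ← qn_n_sub n (by omega)]
    congr 1
    push_cast
    ring
  · rw [if_neg (by omega), if_neg h]

lemma Kmat_rev (n : ℕ) (a : ℂ) (i j : Fin n) :
    Kmat n ((n : ℂ) - 1 - a) (Fin.rev j) (Fin.rev i) = Kinvmat n a i j := by
  simp only [Kmat, Kinvmat, Matrix.of_apply]
  by_cases h : i = j
  · rw [if_pos (by rw [h]), if_pos h, rev_cast, h]
    congr 1
    ring
  · rw [if_neg (fun h2 => h (Fin.rev_injective h2).symm), if_neg h]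

lemma Kinvmat_rev (n : ℕ) (a : ℂ) (i j : Fin n) :
    Kinvmat n ((n : ℂ) - 1 - a) (Fin.rev j) (Fin.rev i) = Kmat n a i j := by
  simp only [Kmat, Kinvmat, Matrix.of_apply]
  by_cases h : i = j
  · rw [if_pos (by rw [h]), if_pos h, rev_cast, h]
    congr 1
    ring
  · rw [if_neg (fun h2 => h (Fin.rev_injective h2).symm), if_neg h]

lemma dF_rev (n : ℕ) (a b : ℂ) (p q : Fin n × Fin n) :
    dF n ((n : ℂ) - 1 - b) ((n : ℂ) - 1 - a) (sig n q) (sig n p) = dF n a b p q := by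
  simp only [dF, sig, Equiv.coe_fn_mk, Matrix.add_apply, Matrix.kroneckerMap_apply, Fmat_rev,
    Kmat_rev, Kinvmat_rev]
  ring

lemma dE_rev (n : ℕ) (a b : ℂ) (p q : Fin n × Fin n) :
    dE n ((n : ℂ) - 1 - b) ((n : ℂ) - 1 - a) (sig n q) (sig n p) = dE n a b p q := by
  simp only [dE, sig, Equiv.coe_fn_mk, Matrix.add_apply, Matrix.kroneckerMap_apply, Emat_rev,
    Kmat_rev, Kinvmat_rev]
  ring

lemma Yproj_eq (n : ℕ) (a b c : ℂ) (t : Fin n) (p : Fin n × Fin n) :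
    Yproj n a b c t p =
      Yinc n ((n : ℂ) - 1 - b) ((n : ℂ) - 1 - a) ((n : ℂ) - 1 - c) (sig n p) (Fin.rev t) := by
  simp only [Yproj, Yinc, sig, Equiv.coe_fn_mk, Matrix.of_apply, Fin.val_rev]
  have h : ∀ i : Fin n, n - ((i : ℕ) + 1) = n - 1 - i := fun i => by omega
  have hr : ∀ i : Fin n, ((n - 1 - (i : ℕ) : ℕ) : ℂ) = (n : ℂ) - 1 - ((i : ℕ) : ℂ) := fun i => by
    rw [← h i, ← Fin.val_rev]
    exact rev_cast n i
  rw [h, h, h]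
  refine if_congr ⟨fun h2 => ?_, fun h2 => ?_⟩ rfl rfl
  · rw [hr, hr, hr]
    linear_combination -h2
  · rw [hr, hr, hr] at h2
    linear_combination -h2

lemma Yproj_F (n k : ℕ) (hk : k < n) (a b c : ℂ) (hc : a + b - c = k)
    (hcn : ∀ m : ℤ, 2 * c ≠ m) :
    Yproj n a b c * dF n a b = Fmat n c * Yproj n a b c := by
  have h := Yinc_F n (n - 1 - k) (by omega) ((n : ℂ) - 1 - b) ((n : ℂ) - 1 - a) ((n : ℂ) - 1 - c)
    (by rw [Nat.cast_sub (by omega), Nat.cast_sub (by omega)]; push_cast; linear_combination -hc)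
    (fun m hm => hcn (2 * n - 2 - m) (by push_cast; linear_combination -hm))
  ext t p
  have h2 := congrFun (congrFun h (sig n p)) (Fin.rev t)
  rw [Matrix.mul_apply, Matrix.mul_apply, ← Equiv.sum_comp (sig n), ← Equiv.sum_comp Fin.revPerm]
    at h2
  rw [Matrix.mul_apply, Matrix.mul_apply]
  simp only [Fin.revPerm_apply, Fmat_rev, dF_rev, ← Yproj_eq] at h2
  rw [Finset.sum_congr rfl fun x _ => mul_comm _ _, h2]
  exact Finset.sum_congr rfl fun x _ => mul_comm _ _

lemma Yproj_E (n k : ℕ) (hn : 2 ≤ n) (hk : k < n) (a b c : ℂ) (hc : a + b - c = k)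
    (hcn : ∀ m : ℤ, 2 * c ≠ m) :
    Yproj n a b c * dE n a b = Emat n * Yproj n a b c := by
  have h := Yinc_E n (n - 1 - k) hn (by omega) ((n : ℂ) - 1 - b) ((n : ℂ) - 1 - a)
    ((n : ℂ) - 1 - c)
    (by rw [Nat.cast_sub (by omega), Nat.cast_sub (by omega)]; push_cast; linear_combination -hc)
    (fun m hm => hcn (2 * n - 2 - m) (by push_cast; linear_combination -hm))
  ext t p
  have h2 := congrFun (congrFun h (sig n p)) (Fin.rev t)
  rw [Matrix.mul_apply, Matrix.mul_apply, ← Equiv.sum_comp (sig n), ← Equiv.sum_comp Fin.revPerm]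
    at h2
  rw [Matrix.mul_apply, Matrix.mul_apply]
  simp only [Fin.revPerm_apply, Emat_rev, dE_rev, ← Yproj_eq] at h2
  rw [Finset.sum_congr rfl fun x _ => mul_comm _ _, h2]
  exact Finset.sum_congr rfl fun x _ => mul_comm _ _

/-! ### Schur lemma -/

lemma supp_P (n k k' : ℕ) (a b c c' : ℂ) (hc : a + b - c = k) (hc' : a + b - c' = k')
    (t' t : Fin n) (h : (t' : ℕ) + k' ≠ t + k) : (Yproj n a b c' * Yinc n a b c) t' t = 0 := by
  rw [Matrix.mul_apply]
  refine Finset.sum_eq_zero fun p _ => ?_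
  simp only [Yproj, Yinc, Matrix.of_apply]
  rw [hc, hc']
  split_ifs with h1 h2
  · exfalso
    apply h
    have : ((t' : ℕ) : ℂ) + k' = (t : ℕ) + k := by linear_combination h2 - h1
    exact_mod_cast this
  · simp
  · simp
  · simp

lemma col_zero (n k k' : ℕ) (hn : 2 ≤ n) (hk : k < n) (hk' : k' < n) (hkk : k ≠ k')
    (a b c c' : ℂ) (hc : a + b - c = k) (hc' : a + b - c' = k')
    (hcn : ∀ m : ℤ, 2 * c ≠ m) (hcn' : ∀ m : ℤ, 2 * c' ≠ m) :
    Yproj n a b c' * Yinc n a b c = 0 := by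
  set P := Yproj n a b c' * Yinc n a b c with hP
  have h1 : qn n 1 ≠ 0 := by
    have := qn_nat_ne_zero n 1 (by omega) (by omega)
    simpa using this
  have hE : P * Emat n = Emat n * P := by
    rw [hP, Matrix.mul_assoc, ← Yinc_E n k hn hk a b c hc hcn, ← Matrix.mul_assoc,
      Yproj_E n k' hn hk' a b c' hc' hcn', Matrix.mul_assoc]
  have hF : P * Fmat n c = Fmat n c' * P := by
    rw [hP, Matrix.mul_assoc, ← Yinc_F n k hk a b c hc hcn, ← Matrix.mul_assoc,
      Yproj_F n k' hk' a b c' hc' hcn', Matrix.mul_assoc]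
  have hcol : ∀ t : ℕ, ∀ ht : t < n, ∀ p, P p ⟨t, ht⟩ = 0 := by
    intro t
    induction t with
    | zero =>
      intro ht p
      by_cases hp : (p : ℕ) + k' = 0 + k
      · have hp0 : 0 < (p : ℕ) := by omega
        have h2 := congrFun (congrFun hE (⟨(p : ℕ) - 1, by omega⟩ : Fin n)) (⟨0, ht⟩ : Fin n)
        have h3 : (P * Emat n) (⟨(p : ℕ) - 1, by omega⟩ : Fin n) (⟨0, ht⟩ : Fin n) = 0 := by
          rw [Matrix.mul_apply]
          refine Finset.sum_eq_zero fun j _ => ?_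
          simp [Emat]
        rw [h3, Matrix.mul_apply, Finset.sum_eq_single p] at h2
        · simp only [Emat, Matrix.of_apply] at h2
          rw [if_pos (by omega)] at h2
          refine (mul_eq_zero.mp h2.symm).resolve_left ?_
          exact div_ne_zero (qn_nat_ne_zero n p hp0 p.2) h1
        · intro j _ hj
          simp only [Emat, Matrix.of_apply]
          rw [if_neg, zero_mul]
          intro h4
          apply hj
          ext
          omega
        · simp
      · exact supp_P n k k' a b c c' hc hc' _ _ hp
    | succ t ih =>
      intro ht p
      have h2 : (P * Fmat n c) p ⟨t, by omega⟩ = 0 := by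
        rw [hF, Matrix.mul_apply]
        refine Finset.sum_eq_zero fun j _ => ?_
        rw [ih (by omega), mul_zero]
      rw [mul_Fmat_apply, dif_pos ht] at h2
      refine (mul_eq_zero.mp h2).resolve_right ?_
      unfold qint
      refine div_ne_zero (qn_ne_zero_of_not_int n (by omega) _ fun m hm => hcn (m + t) ?_) h1
      push_cast
      linear_combination hm
  ext p t
  exact hcol t t.2 p

lemma col_scalar (n k : ℕ) (hn : 2 ≤ n) (hk : k < n)
    (a b c : ℂ) (hc : a + b - c = k) (hcn : ∀ m : ℤ, 2 * c ≠ m) :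
    Yproj n a b c * Yinc n a b c =
      (Yproj n a b c * Yinc n a b c) ⟨0, by omega⟩ ⟨0, by omega⟩ • (1 : Matrix (Fin n) (Fin n) ℂ) := by
  set P := Yproj n a b c * Yinc n a b c with hP
  have h1 : qn n 1 ≠ 0 := by
    have := qn_nat_ne_zero n 1 (by omega) (by omega)
    simpa using this
  have hF : P * Fmat n c = Fmat n c * P := by
    rw [hP, Matrix.mul_assoc, ← Yinc_F n k hk a b c hc hcn, ← Matrix.mul_assoc,
      Yproj_F n k hk a b c hc hcn, Matrix.mul_assoc]
  have hoff : ∀ i j, i ≠ j → P i j = 0 := fun i j hij =>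
    supp_P n k k a b c c hc hc _ _ (fun h => hij (by ext; omega))
  have hd : ∀ t : ℕ, ∀ ht : t < n, P ⟨t, ht⟩ ⟨t, ht⟩ = P ⟨0, by omega⟩ ⟨0, by omega⟩ := by
    intro t
    induction t with
    | zero => intro ht; rfl
    | succ t ih =>
      intro ht
      rw [← ih (by omega)]
      have h2 := congrFun (congrFun hF (⟨t + 1, ht⟩ : Fin n)) (⟨t, by omega⟩ : Fin n)
      rw [mul_Fmat_apply, dif_pos ht, Matrix.mul_apply,
        Finset.sum_eq_single (⟨t, by omega⟩ : Fin n)] at h2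
      · simp only [Fmat, Matrix.of_apply, if_true] at h2
        rw [mul_comm] at h2
        refine mul_left_cancel₀ ?_ h2
        unfold qint
        refine div_ne_zero (qn_ne_zero_of_not_int n (by omega) _ fun m hm => hcn (m + t) ?_) h1
        push_cast
        linear_combination hm
      · intro j _ hj
        rw [hoff _ _ hj, mul_zero]
      · simp
  ext i j
  rw [Matrix.smul_apply]
  by_cases h : i = j
  · subst h
    rw [Matrix.one_apply_eq, smul_eq_mul, mul_one]
    exact hd i i.2
  · rw [Matrix.one_apply_ne h, hoff i j h, smul_zero]


/-! ### The scalar -/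

lemma bq_eq_qbin (n K z : ℕ) (hK : K < n) (hz : z ≤ K) : qbin n (K : ℂ) ((K : ℂ) - z) = bq n K z := by
  rw [← Nat.cast_sub hz, qbin_nat n K (K - z) hK (by omega), bq, if_pos hz,
    show K - (K - z) = z by omega, mul_comm (qfac n z)]

lemma bq_symm (n k i : ℕ) (h : i ≤ k) : bq n k (k - i) = bq n k i := by
  rw [bq, bq, if_pos h, if_pos (by omega), show k - (k - i) = i by omega, mul_comm (qfac n i)]

lemma pd_n_sub (n : ℕ) (hn : n ≠ 0) (x : ℂ) (m : ℕ) : pd n (n - x) m = pd n (x + m - 1) m := by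
  rw [show (n : ℂ) - x = -x + n by ring, pd_add_n n hn, pd_reflect, ← mul_assoc, ← mul_pow]
  simp

lemma neg_one_pow_xic (n : ℕ) (hn : n ≠ 0) (z : ℕ) : (-1 : ℂ) ^ z = xic n ((n : ℂ) * z) := by
  have := xic_nmul n hn z
  push_cast at this
  rw [this, zpow_natCast]

lemma Ssum_corner (n k K : ℕ) (hn : n = K + k + 1) (A B C : ℂ) (hC : A + B - C = K) :
    Ssum n K A B C (K : ℂ) ((K : ℂ) + k) (K + k) * qfac n (K + k)
      = xic n (-((K : ℂ) + k) * (2 * C - (K + k) + 1) / 2 + K * (2 * A - K + 1)) *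
        pd n (2 * B - K) k * pd n (2 * C + K + 1) K := by
  have hnC : (n : ℂ) = K + k + 1 := by rw [hn]; push_cast; ring
  have hn0 : n ≠ 0 := by omega
  have hv := vandermonde n K (by omega) (2 * A - K) (2 * B)
  rw [show 2 * A - K + 2 * B + 1 = 2 * C + K + 1 by linear_combination 2 * hC] at hv
  rw [xic_add, show ∀ x y z w : ℂ, x * y * z * w = x * z * (y * w) by intros; ring, ← hv]
  unfold Ssum
  rw [Finset.sum_mul, Finset.mul_sum, show K + k + 1 = (K + 1) + k by omega,
    Finset.sum_range_add _ (K + 1) k]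
  rw [Finset.sum_eq_zero (s := Finset.range k), add_zero]
  · refine Finset.sum_congr rfl fun z hz => ?_
    have hz' : z ≤ K := by simp at hz; omega
    rw [bq_eq_qbin n K z (by omega) hz', neg_one_pow_xic n hn0]
    have h1 := qfac_ne_zero n z (by omega)
    have h2 := qfac_ne_zero n (K + k - z) (by omega)
    have h3 := qfac_mul_compl n z (by omega)
    rw [show n - 1 = K + k by omega] at h3
    rw [← h3]
    have h4 := pd_add n (2 * B - z) (K - z) k
    rw [show K - z + k = K + k - z by omega, Nat.cast_sub hz',
      show 2 * B - z - ((K : ℂ) - z) = 2 * B - K by ring] at h4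
    push_cast
    rw [show 2 * B - ((K : ℂ) + k) + (K + k - z) = 2 * B - z by ring, h4]
    have he : xic n ((n : ℂ) * z) * xic n ((2 * (z : ℂ) - (K + k)) * (2 * C - (K + k) + 1) / 2)
        = xic n (-((K : ℂ) + k) * (2 * C - (K + k) + 1) / 2) *
          xic n ((z : ℂ) * (2 * A - K + 2 * B - K + 2)) := by
      rw [← xic_add, ← xic_add]
      congr 1
      rw [hnC]
      linear_combination (-2 * (z : ℂ)) * hC
    rw [he]
    field_simp
  · intro z _
    rw [qbin_nat_zero n K z _ (by push_cast; ring)]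
    ring

lemma Wcore_ratio (n k K : ℕ) (hn : n = K + k + 1) (a b c : ℂ) (hc : a + b - c = k) (i : ℕ)
    (hi : i ≤ k) :
    Wcore n K ((n : ℂ) - 1 - b) ((n : ℂ) - 1 - a) ((n : ℂ) - 1 - c) ((K : ℂ) + i) ((K : ℂ) + k - i)
        (n - 1) * pd n (2 * a) i
      = (-1) ^ i * xic n (-(c + 1) * i) * pd n (2 * b - k + i) i *
        Wcore n K ((n : ℂ) - 1 - b) ((n : ℂ) - 1 - a) ((n : ℂ) - 1 - c) (K : ℂ) ((K : ℂ) + k)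
          (n - 1) := by
  have hnC : (n : ℂ) = K + k + 1 := by rw [hn]; push_cast; ring
  have hn0 : n ≠ 0 := by omega
  induction i with
  | zero => simp [xic_zero, pd_zero]
  | succ i ih =>
    have ih := ih (by omega)
    have h := Wcore_last n K hn0 ((n : ℂ) - 1 - b) ((n : ℂ) - 1 - a) ((n : ℂ) - 1 - c)
      (K + i + 1) (K + k - i) (by linear_combination hnC - hc) (by omega) (by omega) (by omega)
    rw [Nat.cast_sub (by omega)] at h
    push_cast at h ⊢
    rw [show 2 * ((n : ℂ) - 1 - b) - ((K : ℂ) + i + 1) + 1 = n - (2 * b - k + (i + 1)) by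
        linear_combination hnC,
      show 2 * ((n : ℂ) - 1 - a) - ((K : ℂ) + k - i) + 1 = n - (2 * a - i) by
        linear_combination hnC, qn_n_sub n hn0, qn_n_sub n hn0,
      show (n : ℂ) - 1 - a - (K + k - i) = i - a by linear_combination hnC,
      show -((n : ℂ) - 1 - b - (K + i + 1)) = (i - a) + (c + 1) by linear_combination -hnC + hc,
      xic_add, show (K : ℂ) + i + 1 - 1 = K + i by ring,
      show (K : ℂ) + k - i - 1 = K + k - (i + 1) by ring, add_assoc (K : ℂ)] at h
    have hx := xic_ne_zero n ((i : ℂ) - a)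
    have hy := xic_ne_zero n (c + 1)
    rw [pd_succ, pd_succ', show 2 * b - k + ((i : ℂ) + 1) - 1 = 2 * b - k + i by ring,
      show -(c + 1) * ((i : ℂ) + 1) = -(c + 1) * i + -(c + 1) by ring, xic_add, xic_neg n (c + 1)]
    generalize Wcore n K _ _ _ ((K : ℂ) + i) _ _ = R0 at *
    generalize Wcore n K _ _ _ ((K : ℂ) + (i + 1)) _ _ = R1 at *
    have h' : R1 * qn n (2 * a - i) = -((xic n (c + 1))⁻¹ * qn n (2 * b - k + (i + 1)) * R0) := by
      field_simp
      refine mul_left_cancel₀ hx ?_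
      linear_combination h
    rw [pow_succ]
    linear_combination pd n (2 * a) i * h' - (xic n (c + 1))⁻¹ * qn n (2 * b - k + (i + 1)) * ih

lemma Wcore_zero (n k i : ℕ) (hn : n ≠ 0) (hk : k < n) (hi : i ≤ k) (a b c : ℂ)
    (hc : a + b - c = k) :
    Wcore n k a b c (i : ℂ) ((k : ℂ) - i) 0
      = (-1) ^ k * (-1) ^ i * xic n ((k : ℂ) * (2 * b - k + 1) / 2) * xic n (-(c + 1) * i) * bq n k i := by
  unfold Wcore Ssum
  have h1 : qbin n (k : ℂ) (i : ℂ) = bq n k i := by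
    rw [qbin_nat n k i hk hi, bq, if_pos hi]
  have h2 : (-1 : ℂ) ^ i = xic n (-((n : ℂ) * i)) := by
    rw [xic_neg, ← neg_one_pow_xic n hn, ← inv_pow]
    norm_num
  rw [h2, neg_one_pow_xic n hn k, ← xic_add, ← xic_add, ← xic_add]
  simp [qfac_zero, pd_zero, xic_zero, h1]
  left
  congr 1
  linear_combination (-(i : ℂ)) * hc

lemma corner_sum (n k K : ℕ) (hn : n = K + k + 1) (a b c : ℂ) (hc : a + b - c = k) :
    (∑ i ∈ Finset.range (k + 1),
      Wcore n K ((n : ℂ) - 1 - b) ((n : ℂ) - 1 - a) ((n : ℂ) - 1 - c) ((K : ℂ) + i) ((K : ℂ) + k - i)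
        (n - 1) * Wcore n k a b c (i : ℂ) ((k : ℂ) - i) 0) * pd n (2 * a) k
      = (-1) ^ k * xic n ((k : ℂ) * (2 * b - k + 1) / 2 + -2 * k * (c + 1) + k * (2 * a - k + 1)) *
        pd n (2 * c + k + 1) k *
        Wcore n K ((n : ℂ) - 1 - b) ((n : ℂ) - 1 - a) ((n : ℂ) - 1 - c) (K : ℂ) ((K : ℂ) + k)
          (n - 1) := by
  have hv := vandermonde n k (by omega) (2 * a - k) (2 * b)
  rw [show 2 * a - k + 2 * b + 1 = 2 * c + k + 1 by linear_combination 2 * hc,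
    ← Finset.sum_range_reflect] at hv
  rw [xic_add, show ∀ s x y z w : ℂ, s * (x * y) * z * w = s * w * x * (y * z) by intros; ring, ← hv,
    Finset.sum_mul, Finset.mul_sum]
  refine Finset.sum_congr rfl fun i hi => ?_
  have hi' : i ≤ k := by simp at hi; omega
  rw [show k + 1 - 1 - i = k - i by omega, bq_symm n k i hi', show k - (k - i) = i by omega,
    Nat.cast_sub hi', Wcore_zero n k i (by omega) (by omega) hi' a b c hc]
  have hr := Wcore_ratio n k K hn a b c hc i hi'
  have hp := pd_add n (2 * a) i (k - i)
  rw [show i + (k - i) = k by omega] at hp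
  rw [hp, show 2 * a - k + ((k : ℂ) - i) = 2 * a - i by ring,
    show 2 * b - ((k : ℂ) - i) = 2 * b - k + i by ring]
  generalize Wcore n K _ _ _ ((K : ℂ) + i) _ _ = R0 at *
  generalize Wcore n K _ _ _ (K : ℂ) _ _ = R1 at *
  have he : xic n (-(c + 1) * i) * xic n (-(c + 1) * i) * xic n ((k : ℂ) * (2 * b - k + 1) / 2) =
    xic n ((k : ℂ) * (2 * b - k + 1) / 2 + -2 * k * (c + 1)) *
      xic n (((k : ℂ) - i) * (2 * a - k + 2 * b - k + 2)) := by
    rw [← xic_add, ← xic_add, ← xic_add]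
    congr 1
    linear_combination -(2 * k - 2 * i) * hc
  have hs : (-1 : ℂ) ^ i * (-1) ^ i = 1 := by rw [← mul_pow]; norm_num
  calc _ = (-1) ^ k * (-1) ^ i * xic n ((k : ℂ) * (2 * b - k + 1) / 2) * xic n (-(c + 1) * i) *
        bq n k i * pd n (2 * a - i) (k - i) * (R0 * pd n (2 * a) i) := by ring
    _ = (-1) ^ k * ((-1) ^ i * (-1) ^ i) * (xic n (-(c + 1) * i) * xic n (-(c + 1) * i) *
        xic n ((k : ℂ) * (2 * b - k + 1) / 2)) * R1 * bq n k i * pd n (2 * a - i) (k - i) *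
        pd n (2 * b - k + i) i := by rw [hr]; ring
    _ = _ := by rw [he, hs]; ring

lemma corner_eq (n k K : ℕ) (hn : n = K + k + 1) (a b c : ℂ) (hc : a + b - c = k) :
    (Yproj n a b c * Yinc n a b c) ⟨0, by omega⟩ ⟨0, by omega⟩ =
      kap n K ((n : ℂ) - 1 - c) * kap n k c * ∑ i ∈ Finset.range (k + 1),
      Wcore n K ((n : ℂ) - 1 - b) ((n : ℂ) - 1 - a) ((n : ℂ) - 1 - c) ((K : ℂ) + i) ((K : ℂ) + k - i)
        (n - 1) * Wcore n k a b c (i : ℂ) ((k : ℂ) - i) 0 := by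
  have hnC : (n : ℂ) = K + k + 1 := by rw [hn]; push_cast; ring
  rw [Matrix.mul_apply, Fintype.sum_prod_type, Finset.mul_sum]
  set T : ℕ → ℂ := fun i => kap n K ((n : ℂ) - 1 - c) * kap n k c *
    (Wcore n K ((n : ℂ) - 1 - b) ((n : ℂ) - 1 - a) ((n : ℂ) - 1 - c) ((K : ℂ) + i) ((K : ℂ) + k - i)
        (n - 1) * Wcore n k a b c (i : ℂ) ((k : ℂ) - i) 0) with hT
  have hs : ∑ i ∈ Finset.range (k + 1), T i
      = ∑ i ∈ Finset.range n, if i < k + 1 then T i else 0 := by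
    rw [← Finset.sum_filter]
    congr 1
    ext i
    simp only [Finset.mem_range, Finset.mem_filter]
    omega
  rw [hs, Finset.sum_range]
  refine Finset.sum_congr rfl fun u _ => ?_
  have hu := u.2
  have hterm : ∀ v : Fin n, (u : ℕ) + (v : ℕ) ≠ k → Yinc n a b c (u, v) ⟨0, by omega⟩ = 0 := by
    intro v hv
    rw [Yinc_eq n k (by omega) a b c hc, fY, if_neg]
    intro h
    apply hv
    simp only [Nat.cast_zero, sub_zero] at h
    exact_mod_cast h
  split_ifs with huk
  · rw [Finset.sum_eq_single (⟨k - u, by omega⟩ : Fin n)]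
    · rw [Yproj_eq, Yinc_eq n k (by omega) a b c hc,
        Yinc_eq n K (by omega) _ _ _ (by linear_combination hnC - hc)]
      have h1 : ((k - (u : ℕ) : ℕ) : ℂ) = (k : ℂ) - (u : ℕ) := Nat.cast_sub (by omega)
      have h2 : ((((sig n) (u, ⟨k - u, by omega⟩)).1 : ℕ) : ℂ) = (K : ℂ) + (u : ℕ) := by
        simp only [sig, Equiv.coe_fn_mk, rev_cast]
        rw [h1, hnC]
        ring
      have h3 : ((((sig n) (u, ⟨k - u, by omega⟩)).2 : ℕ) : ℂ) = (K : ℂ) + k - (u : ℕ) := by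
        simp only [sig, Equiv.coe_fn_mk, rev_cast]
        rw [hnC]
        ring
      have h4 : ((Fin.rev (⟨0, by omega⟩ : Fin n) : Fin n) : ℕ) = n - 1 := by
        simp [Fin.val_rev]
      rw [h2, h3, h4]
      simp only [h1]
      unfold fY
      rw [if_pos, if_pos]
      · rw [hT]
        ring
      · simp
      · rw [Nat.cast_sub (by omega), hnC]
        push_cast
        ring
    · intro v _ hv
      rw [hterm v, mul_zero]
      intro h
      apply hv
      ext
      simp only
      omega
    · simp
  · refine Finset.sum_eq_zero fun v _ => ?_
    rw [hterm v (by omega), mul_zero]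

lemma exp_eq_xic (n : ℕ) (hn : n ≠ 0) (k : ℂ) :
    Complex.exp (Real.pi * Complex.I * (-k) / 2) = xic n (-(n : ℂ) * k / 2) := by
  unfold xic
  congr 1
  have : (n : ℂ) ≠ 0 := by exact_mod_cast hn
  field_simp

lemma scalar_eq (n k : ℕ) (hn : 2 ≤ n) (hk : k < n) (a b c : ℂ) (hc : a + b - c = k)
    (ha : ∀ m : ℤ, 2 * a ≠ m) (hcn : ∀ m : ℤ, 2 * c ≠ m) :
    (Yproj n a b c * Yinc n a b c) ⟨0, by omega⟩ ⟨0, by omega⟩ = qbin n (2 * c + n) (2 * c + 1) := by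
  obtain ⟨K, hK⟩ : ∃ K, n = K + k + 1 := ⟨n - 1 - k, by omega⟩
  have hn0 : n ≠ 0 := by omega
  have hnC : (n : ℂ) = K + k + 1 := by rw [hK]; push_cast; ring
  have hn1 : n - 1 = K + k := by omega
  have hpa : pd n (2 * a) k ≠ 0 := pd_ne_zero n hn0 _ ha k
  have e1 : pd n (2 * ((n : ℂ) - 1 - a) - K) k = pd n (2 * a) k := by
    rw [show 2 * ((n : ℂ) - 1 - a) - K = n - (2 * a - k + 1) by linear_combination hnC,
      pd_n_sub n hn0]
    congr 1
    ring
  have e2 : pd n (2 * ((n : ℂ) - 1 - c) + K + 1) K = (-1) ^ K * pd n (2 * c) K := by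
    rw [show 2 * ((n : ℂ) - 1 - c) + K + 1 = n - (2 * c - K + 1) + n by ring, pd_add_n n hn0,
      pd_n_sub n hn0]
    congr 2
    ring
  have e3 : pd n (2 * ((n : ℂ) - 1 - c)) (K + k) = pd n (2 * c) K * pd n (2 * c - K) k := by
    rw [show 2 * ((n : ℂ) - 1 - c) = n - (2 * c + 2 - n) by ring, pd_n_sub n hn0, ← pd_add]
    congr 1
    push_cast
    linear_combination -hnC
  have e4 : pd n (2 * ((n : ℂ) - 1 - c)) k = pd n (2 * c - K) k := by
    rw [show 2 * ((n : ℂ) - 1 - c) = n - (2 * c + 2 - n) by ring, pd_n_sub n hn0]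
    congr 1
    linear_combination -hnC
  have e5 : pd n (2 * c + k + 1) k = (-1) ^ k * pd n (2 * c - K) k := by
    rw [← pd_add_n n hn0]
    congr 1
    linear_combination -hnC
  have e6 : qbin n (2 * c + n) (2 * c + 1) =
      (-1) ^ (K + k) * (pd n (2 * c) K * pd n (2 * c - K) k) / qfac n (K + k) := by
    rw [qbin_eq n _ _ (K + k) (by omega) (by push_cast; linear_combination hnC), pd_add_n n hn0,
      pd_add]
  have hP : pd n (2 * c) K ≠ 0 := pd_ne_zero n hn0 _ hcn K
  have hQ : pd n (2 * c - K) k ≠ 0 := pd_ne_zero n hn0 _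
    (fun m hm => hcn (m + K) (by push_cast; linear_combination hm)) k
  have e7 := qfac_mul_compl n K (by omega)
  rw [show n - 1 - K = k by omega, hn1] at e7
  have f1 := qfac_ne_zero n K (by omega)
  have f2 := qfac_ne_zero n k (by omega)
  have hS := Ssum_corner n k K hK ((n : ℂ) - 1 - b) ((n : ℂ) - 1 - a) ((n : ℂ) - 1 - c)
    (by linear_combination hnC - hc)
  rw [e1, e2] at hS
  have hR : Wcore n K ((n : ℂ) - 1 - b) ((n : ℂ) - 1 - a) ((n : ℂ) - 1 - c) (K : ℂ) ((K : ℂ) + k)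
      (n - 1) = xic n ((((K : ℂ) + k) * (2 * ((n : ℂ) - 1 - a) - (K + k) + 1)
        - K * (2 * ((n : ℂ) - 1 - b) - K + 1)) / 2) *
      (xic n (-((K : ℂ) + k) * (2 * ((n : ℂ) - 1 - c) - (K + k) + 1) / 2
        + K * (2 * ((n : ℂ) - 1 - b) - K + 1)) *
        pd n (2 * a) k * ((-1) ^ K * pd n (2 * c) K)) / (pd n (2 * c) K * pd n (2 * c - K) k) := by
    unfold Wcore
    rw [hn1, ← hS, e3]
    push_cast
    rw [sub_self, mul_zero, zero_add]
    ring
  have hsum := corner_sum n k K hK a b c hc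
  rw [hR, e5] at hsum
  rw [corner_eq n k K hK a b c hc, e6]
  refine mul_right_cancel₀ hpa ?_
  rw [mul_assoc, hsum]
  unfold kap
  rw [show n - 1 - K = k by omega, show n - 1 - k = K by omega, e4, ← e7, exp_eq_xic n hn0,
    exp_eq_xic n hn0]
  have hph : xic n (-(n : ℂ) * K / 2) * xic n (-(n : ℂ) * k / 2) *
      xic n ((k : ℂ) * (2 * b - k + 1) / 2 + -2 * k * (c + 1) + k * (2 * a - k + 1)) *
      xic n ((((K : ℂ) + k) * (2 * ((n : ℂ) - 1 - a) - (K + k) + 1)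
        - K * (2 * ((n : ℂ) - 1 - b) - K + 1)) / 2) *
      xic n (-((K : ℂ) + k) * (2 * ((n : ℂ) - 1 - c) - (K + k) + 1) / 2
        + K * (2 * ((n : ℂ) - 1 - b) - K + 1)) = (-1) ^ k := by
    have : (-1 : ℂ) ^ k = xic n (-((n : ℂ) * k)) := by
      rw [xic_neg, ← neg_one_pow_xic n hn0, ← inv_pow]
      norm_num
    rw [this, ← xic_add, ← xic_add, ← xic_add, ← xic_add]
    congr 1
    rw [hnC, show c = a + b - k by linear_combination -hc]
    ring
  have hk2 : (-1 : ℂ) ^ k * (-1) ^ k = 1 := by rw [← mul_pow]; norm_num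
  rw [pow_add]
  generalize xic n (-(n : ℂ) * K / 2) = x1 at *
  generalize xic n (-(n : ℂ) * k / 2) = x2 at *
  generalize xic n ((k : ℂ) * (2 * b - k + 1) / 2 + -2 * k * (c + 1) + k * (2 * a - k + 1)) = x3 at *
  generalize xic n ((((K : ℂ) + k) * (2 * ((n : ℂ) - 1 - a) - (K + k) + 1)
        - K * (2 * ((n : ℂ) - 1 - b) - K + 1)) / 2) = x4 at *
  generalize xic n (-((K : ℂ) + k) * (2 * ((n : ℂ) - 1 - c) - (K + k) + 1) / 2
        + K * (2 * ((n : ℂ) - 1 - b) - K + 1)) = x5 at *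
  generalize pd n (2 * c) K = P at *
  generalize pd n (2 * c - K) k = Q at *
  generalize pd n (2 * a) k = Z at *
  generalize qfac n K = g1 at *
  generalize qfac n k = g2 at *
  rw [← hph]
  field_simp
  rw [← hph] at hk2
  linear_combination (x1 * x2 * x3 * x4 * x5) * hk2

theorem tensor_identity_decomposition (n : ℕ) (hn : 2 ≤ n) (a b : ℂ)
    (ha : NotHalfInt a) (hb : NotHalfInt b) (hab : NotHalfInt (a + b)) :
    (1 : Matrix (Fin n × Fin n) (Fin n × Fin n) ℂ)
      = ∑ k ∈ Finset.range n,
          (qbin n (2 * (a + b - (k : ℂ)) + (n : ℂ)) (2 * (a + b - (k : ℂ)) + 1))⁻¹ •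
            (Yinc n a b (a + b - (k : ℂ)) * Yproj n a b (a + b - (k : ℂ))) := by
  have ha2 : ∀ m : ℤ, 2 * a ≠ m := fun m hm => ha m (by linear_combination hm / 2)
  have hcn : ∀ k : ℕ, ∀ m : ℤ, 2 * (a + b - (k : ℂ)) ≠ m := fun k m hm =>
    hab (m + 2 * k) (by push_cast; linear_combination hm / 2)
  set d : ℕ → ℂ := fun k => qbin n (2 * (a + b - (k : ℂ)) + (n : ℂ)) (2 * (a + b - (k : ℂ)) + 1) with hd
  have hd0 : ∀ k, d k ≠ 0 := by
    intro k
    rw [hd]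
    simp only
    rw [qbin_eq n _ _ (n - 1) (by omega) (by
      rw [Nat.cast_sub (by omega)]
      push_cast
      ring), pd_add_n n (by omega)]
    exact div_ne_zero (mul_ne_zero (pow_ne_zero _ (by norm_num))
      (pd_ne_zero n (by omega) _ (hcn k) _)) (qfac_ne_zero n _ (by omega))
  let A : Matrix (Fin n × Fin n) (Fin n × Fin n) ℂ :=
    Matrix.of fun p q => Yinc n a b (a + b - ((q.1 : ℕ) : ℂ)) p q.2
  let B : Matrix (Fin n × Fin n) (Fin n × Fin n) ℂ :=
    Matrix.of fun q p => (d q.1)⁻¹ * Yproj n a b (a + b - ((q.1 : ℕ) : ℂ)) q.2 p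
  have hBA : B * A = 1 := by
    ext q q'
    have h1 : (B * A) q q' = (d q.1)⁻¹ * (Yproj n a b (a + b - ((q.1 : ℕ) : ℂ)) *
        Yinc n a b (a + b - ((q'.1 : ℕ) : ℂ))) q.2 q'.2 := by
      rw [Matrix.mul_apply, Matrix.mul_apply, Finset.mul_sum]
      refine Finset.sum_congr rfl fun p _ => ?_
      simp only [A, B, Matrix.of_apply]
      ring
    rw [h1]
    by_cases h : q.1 = q'.1
    · rw [← h, col_scalar n q.1 hn q.1.2 a b _ (by ring) (hcn _),
        scalar_eq n q.1 hn q.1.2 a b _ (by ring) ha2 (hcn _), Matrix.smul_apply, smul_eq_mul,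
        ← mul_assoc]
      rw [inv_mul_cancel₀ (hd0 _), one_mul, Matrix.one_apply, Matrix.one_apply]
      refine if_congr ?_ rfl rfl
      rw [Prod.ext_iff]
      simp [h]
    · rw [col_zero n q'.1 q.1 hn q'.1.2 q.1.2 (fun h2 => h (by ext; omega)) a b _ _ (by ring)
        (by ring) (hcn _) (hcn _), Matrix.one_apply_ne (fun h2 => h (by rw [h2]))]
      simp
  have hAB := mul_eq_one_comm.mp hBA
  rw [← hAB]
  ext p p'
  rw [Matrix.mul_apply, Fintype.sum_prod_type, Finset.sum_range, Matrix.sum_apply]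
  refine Finset.sum_congr rfl fun k _ => ?_
  rw [Matrix.smul_apply, Matrix.mul_apply, smul_eq_mul, Finset.mul_sum]
  refine Finset.sum_congr rfl fun t _ => ?_
  simp only [A, B, Matrix.of_apply]
  ring

end
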